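/- Let C be a commutative Noetherian ring, ℓ a natural number, I a T-ideal of FreeAlgebra C (Fin ℓ), and let A = FreeAlgebra C (Fin ℓ) / I be the corresponding relatively free affine algebra. Then the T-radical of A (its unique maximal nilpotent T-ideal) is the intersection of finitely many T-prime T-ideals: there exist k ≥ 1 and T-prime T-ideals P_1, …, P_k of A whose intersection P_1 ∩ ⋯ ∩ P_k is a nilpotent T-ideal of A containing every nilpotent T-ideal of A. -/

import Mathlib

/-!
In `A` some finite product of prime ideals `Q₁ ⋯ Qₘ` is zero (`TRad.Good A`). Given this, let `Pᵢ`
be the largest T-ideal contained in `Qᵢ`; each `Pᵢ` is T-prime, the intersection of the `Pᵢ` is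
nilpotent because `P₁ ⋯ Pₘ = 0`, and a nilpotent ideal lies in every prime `Qᵢ`, hence, if it is a
T-ideal, in every `Pᵢ` (`TRad.conclusion_of_good`).

`Good` is built up by one reduction (`TRad.good_of_two`): it passes from `B₁`, `B₂` to `A` along
maps `A → Bᵢ` whose kernels multiply to zero, provided each `Bᵢ` is generated by the image of `A`
and central elements, so that primes contract to primes.

Algebras with a monic identity. Suppose `A` is generated by finitely many elements over a
Noetherian ring and satisfies a multilinear identity of degree `d` with leading coefficient `1`.
If all words of bounded length in the generators are integral of bounded degree over `C`, then `A`
is a finite `C`-module by Shirshov's combinatorial theorem (`TRad.shirshov`,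
`TRad.finite_of_shirshov`), so it is a Noetherian bimodule and `Good`. Integrality is forced for
one word `w` at a time. For commutative `p`, let `ev w y p` be the image of `p` under
`X₀^k₀ ⋯ Xₙ₋₁^kₙ₋₁ ↦ w^k₀ y₀ ⋯ w^kₙ₋₁ yₙ₋₁`, and let `discr n = ∏_{a ≠ b} (Xₐ - X_b)`. Replacing
`yᵢ` by `yᵢ w`, replacing `yⱼ` by `w yⱼ`, and subtracting the two resulting identities multiplies
each `σ`-term by a difference of two variables; a suitable product of such differences is zero for
every `σ ≠ 1`, which yields `ev w y (discr (d + 1)) = 0` for all `y` (`TRad.MultId.kills`). When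
this holds with `n + 1` variables, adjoining `n` central indeterminates and dividing by a suitable
ideal makes `w` a root of a monic polynomial of degree at most `2 n`, and the kernel of the
resulting map annihilates the values `ev w y (discr n)` (`TRad.exists_integral_extension`). Hence
`A` is reduced to an algebra where `w` is integral and a quotient where `discr n` replaces
`discr (n + 1)`; an induction on `n` inside an induction on the finite list of words finishes the
argument (`TRad.good_of_words`).

The general case. By Noetherian induction on an ideal `J` of `C` with `J A = 0` the ideal `J` may
be assumed prime, since for `c d ∈ J` one splits `A` into `A / cA` and `A / Ann c`. If all the
coefficients of all relations lie in `J`, then `A` is a free algebra over the domain `C ⧸ J`.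
Otherwise some relation, which is an identity of `A`, linearizes to a multilinear identity whose
leading coefficient `c` is not in `J`. The quotient `A / cA` is covered by induction. In
`A / Ann c` all the values `ev w y (discr (d + 1))` vanish, and since `discr` is homogeneous with
a coefficient `±1`, linearizing this identity in turn gives a monic multilinear identity
(`TRad.exists_monic_multId`); so the first case applies to `A / Ann c`.
-/

/-- A T-ideal of a unital associative `C`-algebra `A` is a two-sided ideal stable under
every `C`-algebra endomorphism of `A`. -/
def IsTIdeal (C : Type*) [CommSemiring C] (A : Type*) [Ring A] [Algebra C A]
    (I : TwoSidedIdeal A) : Prop :=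
  ∀ φ : A →ₐ[C] A, ∀ x ∈ I, φ x ∈ I

/-- A two-sided ideal `N` of `A` is nilpotent if for some `m` every product of `m`
elements of `N` is zero. -/
def IsNilpotentTwoSidedIdeal {A : Type*} [Ring A] (N : TwoSidedIdeal A) : Prop :=
  ∃ m : ℕ, ∀ f : Fin m → A, (∀ i, f i ∈ N) → (List.ofFn f).prod = 0

/-- A T-ideal `P` of `A` is T-prime if whenever the two-sided ideal generated by the
products `{x * y : x ∈ I, y ∈ J}` of two T-ideals `I`, `J` is contained in `P`, then
`I ⊆ P` or `J ⊆ P`. -/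
def IsTPrime (C : Type*) [CommSemiring C] (A : Type*) [Ring A] [Algebra C A]
    (P : TwoSidedIdeal A) : Prop :=
  ∀ I J : TwoSidedIdeal A, IsTIdeal C A I → IsTIdeal C A J →
    TwoSidedIdeal.span {z : A | ∃ x ∈ I, ∃ y ∈ J, z = x * y} ≤ P → I ≤ P ∨ J ≤ P

namespace TRad

/-- A two-sided ideal is prime here if it satisfies the elementwise primeness condition;
the unit ideal is allowed. -/
def PrimeI {A : Type*} [Ring A] (Q : TwoSidedIdeal A) : Prop :=
  ∀ a b, (∀ x, a * x * b ∈ Q) → a ∈ Q ∨ b ∈ Q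

/-- The ideal `I` contains a product `Q₁ ⋯ Qₘ` of finitely many prime ideals. -/
def ContainsPrimeProduct {A : Type*} [Ring A] (I : TwoSidedIdeal A) : Prop :=
  ∃ L : List (TwoSidedIdeal A), (∀ Q ∈ L, PrimeI Q) ∧
    ∀ l : List A, List.Forall₂ (fun x Q => x ∈ Q) l L → l.prod ∈ I

/-- Some product of finitely many prime ideals of `A` vanishes. -/
def Good (A : Type*) [Ring A] : Prop := ContainsPrimeProduct (⊥ : TwoSidedIdeal A)

/-- A ring homomorphism along which primes contract to primes, because the target is generated
by the image together with central elements. -/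
def CentGen {A B : Type*} [Ring A] [Ring B] (φ : A →+* B) : Prop :=
  ∀ (Q : TwoSidedIdeal B) (a b : A), (∀ x, φ a * φ x * φ b ∈ Q) → ∀ t, φ a * t * φ b ∈ Q

theorem CentGen.of_surjective {A B : Type*} [Ring A] [Ring B] {φ : A →+* B}
    (h : Function.Surjective φ) : CentGen φ := by
  intro Q a b hx t
  obtain ⟨x, rfl⟩ := h t
  exact hx x

theorem Good.comap {A B : Type*} [Ring A] [Ring B] {φ : A →+* B} (h : CentGen φ)
    (hB : Good B) : ContainsPrimeProduct (TwoSidedIdeal.ker φ) := by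
  obtain ⟨L, hL, hz⟩ := hB
  refine ⟨L.map (TwoSidedIdeal.comap φ), ?_, ?_⟩
  · intro Q hQ
    obtain ⟨Q', hQ', rfl⟩ := List.mem_map.1 hQ
    intro a b hab
    simp only [TwoSidedIdeal.mem_comap] at *
    refine hL Q' hQ' _ _ (h Q' a b fun x => ?_)
    simpa using hab x
  · intro l hl
    rw [TwoSidedIdeal.mem_ker, map_list_prod]
    have := hz (l.map φ) (by
      rw [List.forall₂_map_left_iff]
      rw [List.forall₂_map_right_iff] at hl
      exact hl.imp fun a b hab => by simpa [TwoSidedIdeal.mem_comap] using hab)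
    simpa [TwoSidedIdeal.mem_bot] using this

/-- Concatenating the two lists of primes, an ideal `K` that contains `I J` contains a product of
primes as soon as `I` and `J` do. -/
theorem good_of_mul {A : Type*} [Ring A] {I J : TwoSidedIdeal A} (hI : ContainsPrimeProduct I)
    (hJ : ContainsPrimeProduct J) (K : TwoSidedIdeal A)
    (h : ∀ a ∈ I, ∀ b ∈ J, a * b ∈ K) : ContainsPrimeProduct K := by
  obtain ⟨L, hL, hz⟩ := hI
  obtain ⟨L', hL', hz'⟩ := hJ
  refine ⟨L ++ L', ?_, ?_⟩
  · intro Q hQ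
    rcases List.mem_append.1 hQ with h | h
    exacts [hL _ h, hL' _ h]
  · intro l hl
    obtain ⟨l1, l2, h1, h2, rfl⟩ : ∃ l1 l2, List.Forall₂ (fun x Q => x ∈ Q) l1 L ∧
        List.Forall₂ (fun x Q => x ∈ Q) l2 L' ∧ l = l1 ++ l2 :=
      ⟨l.take L.length, l.drop L.length, List.forall₂_take_append _ _ _ hl,
        List.forall₂_drop_append _ _ _ hl, by simp⟩
    rw [List.prod_append]
    exact h _ (hz _ h1) _ (hz' _ h2)

/-- The basic reduction: if the kernels of two maps multiply to zero, the property `Good`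
passes from the two targets to the source. -/
theorem good_of_two {A B₁ B₂ : Type*} [Ring A] [Ring B₁] [Ring B₂] {φ₁ : A →+* B₁}
    {φ₂ : A →+* B₂} (h₁ : CentGen φ₁) (h₂ : CentGen φ₂) (g₁ : Good B₁) (g₂ : Good B₂)
    (h : ∀ a b, φ₁ a = 0 → φ₂ b = 0 → a * b = 0) : Good A :=
  good_of_mul (g₁.comap h₁) (g₂.comap h₂) _ fun a ha b hb => by
    rw [TwoSidedIdeal.mem_bot]
    exact h a b ((TwoSidedIdeal.mem_ker _).1 ha) ((TwoSidedIdeal.mem_ker _).1 hb)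

theorem Good.of_equiv {A B : Type*} [Ring A] [Ring B] (e : A ≃+* B) (h : Good B) : Good A := by
  obtain ⟨L, hL, hz⟩ := h.comap (φ := (e : A →+* B)) (.of_surjective e.surjective)
  refine ⟨L, hL, fun l hl => ?_⟩
  have := hz l hl
  rw [TwoSidedIdeal.mem_ker] at this
  rw [TwoSidedIdeal.mem_bot]
  simpa using this

theorem good_of_subsingleton {A : Type*} [Ring A] [Subsingleton A] : Good A :=
  ⟨[], by simp, fun l _ => by rw [TwoSidedIdeal.mem_bot]; exact Subsingleton.elim _ _⟩

theorem good_of_noZeroDivisors {A : Type*} [Ring A] [NoZeroDivisors A] : Good A := by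
  refine ⟨[⊥], ?_, ?_⟩
  · intro Q hQ a b hab
    simp only [List.mem_singleton] at hQ
    subst hQ
    have := hab 1
    simpa [TwoSidedIdeal.mem_bot] using this
  · intro l hl
    rcases hl with _ | ⟨h, hl⟩
    cases hl
    simpa using h

/-! ### From primes to T-primes -/

/-- The largest T-ideal inside the ideal `Q`. -/
def tCore (C : Type*) [CommRing C] {A : Type*} [Ring A] [Algebra C A] (Q : TwoSidedIdeal A) :
    TwoSidedIdeal A :=
  TwoSidedIdeal.mk' {x | ∀ φ : A →ₐ[C] A, φ x ∈ Q}
    (fun φ => by simp [Q.zero_mem])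
    (fun hx hy φ => by simpa using Q.add_mem (hx φ) (hy φ))
    (fun hx φ => by simpa using Q.neg_mem (hx φ))
    (fun hy φ => by simpa using Q.mul_mem_left _ _ (hy φ))
    (fun hx φ => by simpa using Q.mul_mem_right _ _ (hx φ))

section
variable {C : Type*} [CommRing C] {A : Type*} [Ring A] [Algebra C A]

theorem mem_tCore {Q : TwoSidedIdeal A} {x : A} : x ∈ tCore C Q ↔ ∀ φ : A →ₐ[C] A, φ x ∈ Q := by
  unfold tCore
  rw [TwoSidedIdeal.mem_mk']
  rfl

theorem tCore_le (Q : TwoSidedIdeal A) : tCore C Q ≤ Q := fun _ hx => by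
  simpa using mem_tCore.1 hx (AlgHom.id C A)

theorem isTIdeal_tCore (Q : TwoSidedIdeal A) : IsTIdeal C A (tCore C Q) := fun φ _ hx =>
  mem_tCore.2 fun ψ => mem_tCore.1 hx (ψ.comp φ)

theorem le_tCore {Q I : TwoSidedIdeal A} (hI : IsTIdeal C A I) (h : I ≤ Q) : I ≤ tCore C Q :=
  fun x hx => mem_tCore.2 fun φ => h (hI φ x hx)

theorem isTPrime_tCore {Q : TwoSidedIdeal A} (hQ : PrimeI Q) : IsTPrime C A (tCore C Q) := by
  intro I J hI hJ h
  by_cases hIQ : I ≤ Q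
  · exact Or.inl (le_tCore hI hIQ)
  right
  apply le_tCore hJ
  rw [TwoSidedIdeal.le_iff, Set.not_subset] at hIQ
  obtain ⟨a, ha, haQ⟩ := hIQ
  intro b hb
  refine (hQ a b fun x => ?_).resolve_left haQ
  exact tCore_le Q (h (TwoSidedIdeal.subset_span ⟨a * x, I.mul_mem_right _ _ ha, b, hb, rfl⟩))

theorem le_of_nilpotent {Q N : TwoSidedIdeal A} (hQ : PrimeI Q)
    (hN : IsNilpotentTwoSidedIdeal N) : N ≤ Q := by
  obtain ⟨m, hm⟩ := hN
  intro a ha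
  -- If `a ∉ Q`, primeness yields arbitrarily long products of elements of `N` outside `Q`.
  by_contra haQ
  have key : ∀ n : ℕ, ∃ f : Fin n → A, (∀ i, f i ∈ N) ∧ (List.ofFn f).prod * a ∉ Q := by
    intro n
    induction n with
    | zero => exact ⟨Fin.elim0, fun i => i.elim0, by simpa using haQ⟩
    | succ n ih =>
      obtain ⟨f, hf, hfa⟩ := ih
      have : ¬ ∀ x, a * x * ((List.ofFn f).prod * a) ∈ Q := fun h =>
        (hQ _ _ h).elim haQ hfa
      push Not at this
      obtain ⟨x, hx⟩ := this
      refine ⟨Fin.cons (a * x) f, ?_, ?_⟩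
      · intro i
        refine Fin.cases ?_ ?_ i
        · simpa using N.mul_mem_right _ _ ha
        · simpa using hf
      · simpa [List.ofFn_succ, mul_assoc] using hx
  obtain ⟨f, hf, hfa⟩ := key m
  rw [hm f hf, zero_mul] at hfa
  exact hfa Q.zero_mem

/-- The T-primes are the `tCore`s of the primes whose product vanishes. A product of elements of
their intersection, one for each prime, is zero; and nilpotent ideals lie in every prime. -/
theorem conclusion_of_good (h : Good A) :
    ∃ k : ℕ, 1 ≤ k ∧ ∃ P : Fin k → TwoSidedIdeal A,
      (∀ i, IsTIdeal C A (P i) ∧ IsTPrime C A (P i)) ∧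
      IsTIdeal C A (⨅ i, P i) ∧
      IsNilpotentTwoSidedIdeal (⨅ i, P i) ∧
      ∀ N : TwoSidedIdeal A, IsTIdeal C A N → IsNilpotentTwoSidedIdeal N →
        N ≤ ⨅ i, P i := by
  obtain ⟨L, hL, hz⟩ := h
  -- The unit ideal is prepended so that the family is nonempty.
  let M : List (TwoSidedIdeal A) := ⊤ :: L
  have hM : ∀ Q ∈ M, PrimeI Q := by
    intro Q hQ
    rcases List.mem_cons.1 hQ with rfl | h
    · exact fun a b _ => Or.inl trivial
    · exact hL Q h
  have hMz : ∀ f : Fin M.length → A, (∀ i, f i ∈ M.get i) → (List.ofFn f).prod = 0 := by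
    intro f hf
    have h1 : List.ofFn f = f 0 :: List.ofFn (fun i : Fin L.length => f i.succ) := by
      exact List.ofFn_succ
    have := hz (List.ofFn (fun i : Fin L.length => f i.succ)) (by
      rw [List.forall₂_iff_get]
      refine ⟨by simp, fun i h1 h2 => ?_⟩
      have := hf (Fin.succ ⟨i, h2⟩)
      simpa [M] using this)
    rw [h1, List.prod_cons, (TwoSidedIdeal.mem_bot _).1 this, mul_zero]
  refine ⟨M.length, by simp [M], fun i => tCore C (M.get i), fun i =>
    ⟨isTIdeal_tCore _, isTPrime_tCore (hM _ (List.get_mem _ _))⟩, ?_, ?_, ?_⟩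
  · intro φ x hx
    rw [TwoSidedIdeal.mem_iInf] at hx ⊢
    exact fun i => isTIdeal_tCore _ φ x (hx i)
  · refine ⟨M.length, fun f hf => hMz f fun i => ?_⟩
    exact tCore_le _ (((TwoSidedIdeal.mem_iInf A).1 (hf i)) i)
  · intro N hN hnil
    exact le_iInf fun i => le_tCore hN (le_of_nilpotent (hM _ (List.get_mem _ _)) hnil)

end
end TRad

namespace TRad

/-! ### Algebras finite over a Noetherian ring -/

/-- Noether's argument: if `I` is not prime, say `a A b ⊆ I` with `a, b ∉ I`, then `I` contains a
product of two strictly larger ideals. -/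
theorem contains_of_noetherian {A : Type*} [Ring A] [WellFoundedGT (TwoSidedIdeal A)]
    (I : TwoSidedIdeal A) : ContainsPrimeProduct I := by
  induction I using WellFoundedGT.induction with
  | ind I ih =>
  by_cases hI : PrimeI I
  · refine ⟨[I], by simpa using hI, fun l hl => ?_⟩
    rcases hl with _ | ⟨h, hl⟩
    cases hl
    simpa using h
  unfold PrimeI at hI
  push Not at hI
  obtain ⟨a, b, hab, ha, hb⟩ := hI
  let I₁ : TwoSidedIdeal A := TwoSidedIdeal.mk' {x | ∀ z, x * z * b ∈ I}
    (fun z => by simp [I.zero_mem])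
    (fun hx hy z => by simpa [add_mul] using I.add_mem (hx z) (hy z))
    (fun hx z => by simpa using I.neg_mem (hx z))
    (fun {x y} hy z => by simpa [mul_assoc] using I.mul_mem_left x _ (hy z))
    (fun {x y} hx z => by simpa [mul_assoc] using hx (y * z))
  have hI₁ : ∀ x, x ∈ I₁ ↔ ∀ z, x * z * b ∈ I := fun x => by
    simp only [I₁]; rw [TwoSidedIdeal.mem_mk']; rfl
  let I₂ : TwoSidedIdeal A := TwoSidedIdeal.mk' {y | ∀ x ∈ I₁, x * y ∈ I}
    (fun z => by simp [I.zero_mem])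
    (fun hx hy z hz => by simpa [mul_add] using I.add_mem (hx z hz) (hy z hz))
    (fun hx z hz => by simpa using I.neg_mem (hx z hz))
    (fun {x y} hy z hz => by simpa [mul_assoc] using hy (z * x) (I₁.mul_mem_right _ _ hz))
    (fun {x y} hx z hz => by simpa [mul_assoc] using I.mul_mem_right _ y (hx z hz))
  have hI₂ : ∀ x, x ∈ I₂ ↔ ∀ z ∈ I₁, z * x ∈ I := fun x => by
    simp only [I₂]; rw [TwoSidedIdeal.mem_mk']; rfl
  refine good_of_mul (ih I₁ ?_) (ih I₂ ?_) I fun x hx y hy => (hI₂ y).1 hy x hx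
  · refine lt_of_le_of_ne (fun x hx => (hI₁ x).2 fun z => ?_) fun h => ha ?_
    · exact I.mul_mem_right _ _ (I.mul_mem_right _ _ hx)
    · rw [h]; exact (hI₁ a).2 hab
  · refine lt_of_le_of_ne (fun x hx => (hI₂ x).2 fun z hz => ?_) fun h => hb ?_
    · exact I.mul_mem_left _ _ hx
    · rw [h]; exact (hI₂ b).2 fun z hz => by simpa using (hI₁ z).1 hz 1

theorem good_of_finite (C : Type*) [CommRing C] [IsNoetherianRing C] {A : Type*} [Ring A]
    [Algebra C A] [Module.Finite C A] : Good A := by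
  let f : TwoSidedIdeal A → Submodule C A := fun I =>
    { carrier := I
      zero_mem' := I.zero_mem
      add_mem' := I.add_mem
      smul_mem' := fun c x hx => by
        rw [Algebra.smul_def]
        exact I.mul_mem_left _ _ hx }
  have hf : StrictMono f := by
    intro I J h
    exact SetLike.lt_iff_le_and_exists.2 ⟨fun x hx => h.le hx, by
      obtain ⟨x, hx, hx'⟩ := (SetLike.lt_iff_le_and_exists.1 h).2
      exact ⟨x, hx, hx'⟩⟩
  have : WellFoundedGT (TwoSidedIdeal A) := hf.wellFoundedGT
  exact contains_of_noetherian _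

end TRad

namespace TRad
open MvPolynomial

/-! ### Evaluating commutative polynomials along a word -/

section ev
variable {C : Type*} [CommRing C] {A : Type*} [Ring A] [Algebra C A]

/-- The product `w ^ k₀ * y₀ * w ^ k₁ * y₁ * ⋯`. -/
def interlace (w : A) {n : ℕ} (y : Fin n → A) (k : Fin n →₀ ℕ) : A :=
  (List.ofFn fun i => w ^ k i * y i).prod

/-- The linear map sending the monomial `X₀ ^ k₀ ⋯ Xₙ₋₁ ^ kₙ₋₁` to
`w ^ k₀ * y₀ * ⋯ * w ^ kₙ₋₁ * yₙ₋₁`: the variable `Xᵢ` records the powers of `w` standing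
just before `yᵢ`. -/
noncomputable def ev (w : A) {n : ℕ} (y : Fin n → A) : MvPolynomial (Fin n) C →ₗ[C] A :=
  (basisMonomials (Fin n) C).constr C (interlace w y)

theorem ev_monomial (w : A) {n : ℕ} (y : Fin n → A) (k : Fin n →₀ ℕ) (c : C) :
    ev w y (monomial k c) = c • interlace w y k := by
  have h : ev w y (monomial k (1 : C)) = interlace w y k := by
    have := (basisMonomials (Fin n) C).constr_basis C (interlace w y) k
    rwa [coe_basisMonomials] at this
  rw [← h, ← map_smul, smul_monomial, smul_eq_mul, mul_one]

theorem ev_one (w : A) {n : ℕ} (y : Fin n → A) :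
    ev w y (1 : MvPolynomial (Fin n) C) = (List.ofFn y).prod := by
  rw [show (1 : MvPolynomial (Fin n) C) = monomial 0 1 from rfl, ev_monomial]
  simp [interlace]

theorem ev_X_mul (w : A) {n : ℕ} (y : Fin n → A) (i : Fin n) (p : MvPolynomial (Fin n) C) :
    ev w y (X i * p) = ev w (Function.update y i (w * y i)) p := by
  induction p using MvPolynomial.induction_on' with
  | monomial k c =>
    rw [X, monomial_mul, one_mul, ev_monomial, ev_monomial]
    congr 1
    unfold interlace
    congr 2
    funext j
    by_cases h : j = i
    · subst h
      simp [add_comm 1, pow_succ, mul_assoc]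
    · simp [h]
  | add p q hp hq => rw [mul_add, map_add, map_add, hp, hq]

theorem prod_ofFn_congr {n : ℕ} (i : Fin n) (f g : Fin (n + 1) → A)
    (h : f i.castSucc * f i.succ = g i.castSucc * g i.succ)
    (h' : ∀ j, j ≠ i.castSucc → j ≠ i.succ → f j = g j) :
    (List.ofFn f).prod = (List.ofFn g).prod := by
  induction n with
  | zero => exact i.elim0
  | succ n ih =>
    rw [List.ofFn_succ, List.ofFn_succ (f := g), List.prod_cons, List.prod_cons]
    refine Fin.cases (fun h h' => ?_) (fun i h h' => ?_) i h h'
    · rw [List.ofFn_succ, List.ofFn_succ (f := fun i : Fin (n + 1) => g i.succ), List.prod_cons,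
        List.prod_cons, ← mul_assoc, ← mul_assoc]
      congr 1
      congr 2
      funext j
      apply h'
      · simp [Fin.ext_iff]
      · simp [Fin.ext_iff]
    · congr 1
      · apply h'
        · simp [Fin.ext_iff]
        · simp [Fin.ext_iff]
      · exact ih i _ _ (by simpa using h) fun j h1 h2 => h' _
          (by simpa [Fin.ext_iff] using h1) (by simpa [Fin.ext_iff] using h2)

theorem ev_X_succ_mul (w : A) {n : ℕ} (y : Fin (n + 1) → A) (i : Fin n)
    (p : MvPolynomial (Fin (n + 1)) C) :
    ev w y (X i.succ * p) = ev w (Function.update y i.castSucc (y i.castSucc * w)) p := by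
  induction p using MvPolynomial.induction_on' with
  | monomial k c =>
    rw [X, monomial_mul, one_mul, ev_monomial, ev_monomial]
    congr 1
    apply prod_ofFn_congr i
    · have : i.succ ≠ i.castSucc := by simp [Fin.ext_iff]
      simp [add_comm 1, pow_succ', mul_assoc, this]
    · intro j h1 h2
      simp [h1, Ne.symm h2]
  | add p q hp hq => rw [mul_add, map_add, map_add, hp, hq]

theorem map_ev {B : Type*} [Ring B] [Algebra C B] (φ : A →ₐ[C] B) (w : A) {n : ℕ}
    (y : Fin n → A) (p : MvPolynomial (Fin n) C) : φ (ev w y p) = ev (φ w) (φ ∘ y) p := by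
  induction p using MvPolynomial.induction_on' with
  | monomial k c =>
    rw [ev_monomial, ev_monomial, map_smul]
    simp only [interlace, map_list_prod, List.map_ofFn]
    congr 3
    funext i
    simp
  | add p q hp hq => rw [map_add, map_add, map_add, hp, hq]

theorem ev_cons (w b : A) {n : ℕ} (y : Fin n → A) (j : ℕ) (p : MvPolynomial (Fin n) C) :
    ev w (Fin.cons b y) (X 0 ^ j * rename Fin.succ p) = w ^ j * b * ev w y p := by
  induction p using MvPolynomial.induction_on' with
  | monomial k c =>
    rw [rename_monomial, X_pow_eq_monomial, monomial_mul, one_mul, ev_monomial, ev_monomial,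
      mul_smul_comm]
    congr 1
    simp only [interlace]
    rw [List.ofFn_succ, List.prod_cons]
    congr 1
    · have : Finsupp.mapDomain Fin.succ k 0 = 0 :=
        Finsupp.mapDomain_of_notMem_range _ _ (by simp)
      simp [this]
    · congr 2
      funext i
      rw [Finsupp.add_apply, Finsupp.mapDomain_apply (Fin.succ_injective n)]
      simp
  | add p q hp hq => rw [map_add, mul_add, map_add, hp, hq, map_add, mul_add]

/-- All values of `p` at the word `w` vanish. -/
def Kills (w : A) {n : ℕ} (p : MvPolynomial (Fin n) C) : Prop := ∀ y : Fin n → A, ev w y p = 0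

theorem Kills.mul {w : A} {n : ℕ} {p : MvPolynomial (Fin n) C} (h : Kills w p)
    (q : MvPolynomial (Fin n) C) : Kills w (q * p) := by
  induction q using MvPolynomial.induction_on with
  | C a => intro y; rw [C_mul', map_smul, h y, smul_zero]
  | add q r hq hr => intro y; rw [add_mul, map_add, hq y, hr y, add_zero]
  | mul_X q i hq => intro y; rw [mul_comm q, mul_assoc, ev_X_mul, hq]

theorem Kills.of_dvd {w : A} {n : ℕ} {p q : MvPolynomial (Fin n) C} (h : Kills w p)
    (hd : p ∣ q) : Kills w q := by
  obtain ⟨r, rfl⟩ := hd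
  rw [mul_comm]
  exact h.mul r

end ev

section disc
variable (C : Type*) [CommRing C]

/-- The factor `Xₐ - X_b`, replaced by `1` when `a = b`. -/
noncomputable def diffFactor {n : ℕ} (a b : Fin n) : MvPolynomial (Fin n) C :=
  if a = b then 1 else X a - X b

/-- The discriminant-like polynomial `∏_{a ≠ b} (Xₐ - X_b)`, over ordered pairs. -/
noncomputable def discr (n : ℕ) : MvPolynomial (Fin n) C := ∏ a, ∏ b, diffFactor C a b

theorem discr_zero : discr C 0 = 1 := by simp [discr]

theorem discr_succ (n : ℕ) : discr C (n + 1) =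
    (-1) ^ n * (rename Fin.succ (discr C n) * (∏ i : Fin n, (X 0 - X i.succ)) ^ 2) := by
  have h1 : ∀ b : Fin n, diffFactor C 0 b.succ = X 0 - X b.succ := fun b => by
    simp [diffFactor, (Fin.succ_ne_zero b).symm]
  have h2 : ∀ b : Fin n, diffFactor C b.succ 0 = - (X 0 - X b.succ) := fun b => by
    simp [diffFactor]
  have h3 : ∀ a b : Fin n, diffFactor C a.succ b.succ = rename Fin.succ (diffFactor C a b) :=
    fun a b => by
      unfold diffFactor
      split_ifs with h h' h' <;> simp_all
  unfold discr
  simp only [Fin.prod_univ_succ (n := n), h1, h2, h3, Finset.prod_mul_distrib, map_prod,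
    Finset.prod_neg, Finset.card_univ, Fintype.card_fin]
  simp only [diffFactor, if_true]
  ring

theorem prod_dvd_discr (d : ℕ) :
    (∏ i : Fin d, ∏ j : Fin d, diffFactor C i.succ j.castSucc) ∣ discr C (d + 1) := by
  unfold discr
  rw [Fin.prod_univ_succ]
  refine Dvd.dvd.mul_left ?_ _
  refine Finset.prod_dvd_prod_of_dvd _ _ fun i _ => ?_
  rw [Fin.prod_univ_castSucc]
  exact dvd_mul_right _ _

/-- Each factor `Xₐ - X_b` is, up to sign, monic for the lexicographic order, hence so is the
product. -/
theorem exists_isUnit_coeff_discr (n : ℕ) : ∃ k, IsUnit ((discr C n).coeff k) := by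
  nontriviality C
  let m : MonomialOrder (Fin n) := MonomialOrder.lex
  have hX : ∀ a b : Fin n, a < b → m.Monic (X a - X b : MvPolynomial (Fin n) C) := by
    intro a b hab
    have hd : m.toSyn (m.degree (X b : MvPolynomial (Fin n) C)) <
        m.toSyn (m.degree (X a : MvPolynomial (Fin n) C)) := by
      rw [m.degree_X, m.degree_X]
      exact MonomialOrder.lex_lt_iff.2 (Finsupp.Lex.single_lt_iff.2 hab)
    rw [MonomialOrder.Monic, m.leadingCoeff_sub_of_lt hd]
    exact m.monic_X
  obtain ⟨q, hq, u, hu, hqu⟩ : ∃ q : MvPolynomial (Fin n) C, m.Monic q ∧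
      ∃ u : C, IsUnit u ∧ discr C n = u • q := by
    have h : ∀ a b : Fin n, ∃ q : MvPolynomial (Fin n) C, m.Monic q ∧
        ∃ u : C, IsUnit u ∧ diffFactor C a b = u • q := by
      intro a b
      unfold diffFactor
      rcases lt_trichotomy a b with h | h | h
      · exact ⟨_, hX a b h, 1, isUnit_one, by simp [h.ne]⟩
      · exact ⟨1, m.monic_one, 1, isUnit_one, by simp [h]⟩
      · exact ⟨_, hX b a h, -1, isUnit_one.neg, by simp [h.ne']⟩
    choose q hq u hu hqu using h
    refine ⟨∏ a, ∏ b, q a b, .prod fun a _ => .prod fun b _ => hq a b, ∏ a, ∏ b, u a b, ?_, ?_⟩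
    · simp only [IsUnit.prod_univ_iff]
      exact fun a b => hu a b
    · simp only [discr, hqu, smul_eq_C_mul, Finset.prod_mul_distrib, map_prod]
  refine ⟨m.degree q, ?_⟩
  rw [hqu, coeff_smul, show coeff (m.degree q) q = 1 from hq, smul_eq_mul, mul_one]
  exact hu

end disc
end TRad

namespace TRad
open MvPolynomial

/-! ### Multilinear identities and discriminants -/

section mult
variable {C : Type*} [CommRing C] {d : ℕ}

/-- The multilinear polynomial `∑ σ, α σ • x_{σ 0} ⋯ x_{σ (d-1)}` vanishes on `A`. -/
def MultId (A : Type*) [Ring A] [Algebra C A] (α : Equiv.Perm (Fin d) → C) : Prop :=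
  ∀ x : Fin d → A, ∑ σ, α σ • (List.ofFn fun i => x (σ i)).prod = 0

theorem perm_eq_one_of_succ (σ : Equiv.Perm (Fin d))
    (h : ∀ k k' : Fin d, k.succ = k'.castSucc → (σ k).succ = (σ k').castSucc) : σ = 1 := by
  have hm : StrictMono σ := by
    cases d with
    | zero => exact fun a => a.elim0
    | succ n =>
      rw [Fin.strictMono_iff_lt_succ]
      intro i
      have := h i.castSucc i.succ rfl
      rw [Fin.ext_iff] at this
      rw [Fin.lt_def]
      simp at this
      omega
  have := (StrictMono.range_inj hm strictMono_id).1 (by simp)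
  ext i
  simp [this]

theorem snoc_update_comp {A : Type*} (y : Fin d → A) (z : A) (σ : Equiv.Perm (Fin d)) (i : Fin d) (a : A) :
    Function.update (Fin.snoc (α := fun _ => A) (y ∘ σ) z) (σ⁻¹ i).castSucc a =
      Fin.snoc (α := fun _ => A) (Function.update y i a ∘ σ) z := by
  funext j
  refine Fin.lastCases ?_ (fun k => ?_) j
  · rw [Function.update_of_ne (Fin.castSucc_lt_last _).ne']
    simp
  · by_cases h : k = σ⁻¹ i
    · subst h
      simp
    · have h' : σ k ≠ i := fun e => h (by simp [← e])
      rw [Function.update_of_ne (by simpa using h)]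
      simp [h']

variable {A : Type*} [Ring A] [Algebra C A]

/-- A multilinear identity forces its leading coefficient to annihilate all values of the
discriminant: multiplying the `x_i` by `w` on either side turns the identity into one whose
`σ`-term is multiplied by differences of variables, which vanish for every `σ ≠ 1`. -/
theorem MultId.kills {α : Equiv.Perm (Fin d) → C} (h : MultId A α) (w : A) :
    Kills w (α 1 • discr C (d + 1)) := by
  -- `Fam P`: the identity remains true when its `σ`-term is multiplied by `P σ` in the sense of
  -- `ev`, where the word `y_{σ 0} ⋯ y_{σ (d-1)} z` has `d + 1` slots for powers of `w`.
  let Fam : (Equiv.Perm (Fin d) → MvPolynomial (Fin (d + 1)) C) → Prop := fun P =>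
    ∀ (y : Fin d → A) (z : A),
      ∑ σ, α σ • ev w (Fin.snoc (α := fun _ => A) (y ∘ σ) z) (P σ) = 0
  have h1 : Fam fun _ => 1 := by
    intro y z
    have := congrArg (· * z) (h y)
    simp only [Finset.sum_mul, zero_mul, smul_mul_assoc] at this
    refine Eq.trans (Finset.sum_congr rfl fun σ _ => ?_) this
    rw [ev_one, List.ofFn_succ']
    simp [List.concat_eq_append, Function.comp_def]
  have hs : ∀ P i j, Fam P →
      Fam fun σ => (X (σ⁻¹ i).succ - X (σ⁻¹ j).castSucc) * P σ := by
    intro P i j hP y z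
    have e1 := hP (Function.update y i (y i * w)) z
    have e2 := hP (Function.update y j (w * y j)) z
    have e3 := congrArg₂ (· - ·) e1 e2
    simp only [sub_zero, ← Finset.sum_sub_distrib] at e3
    refine Eq.trans ?_ e3
    refine Finset.sum_congr rfl fun σ _ => ?_
    beta_reduce
    rw [sub_mul, map_sub, ev_X_succ_mul, ev_X_mul, smul_sub]
    congr 3
    · rw [← snoc_update_comp]
      simp
    · rw [← snoc_update_comp]
      simp
  have hp : ∀ s : Finset (Fin d × Fin d),
      Fam fun σ => ∏ p ∈ s, (X (σ⁻¹ p.1).succ - X (σ⁻¹ p.2).castSucc) := by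
    intro s
    induction s using Finset.induction_on with
    | empty => simpa using h1
    | insert p s hp ih =>
      simpa only [Finset.prod_insert hp] using hs _ p.1 p.2 ih
  let s : Finset (Fin d × Fin d) := Finset.univ.filter fun p => p.1.succ ≠ p.2.castSucc
  have key : Kills w (α 1 • ∏ p ∈ s, (X p.1.succ - X p.2.castSucc) :
      MvPolynomial (Fin (d + 1)) C) := by
    intro y
    have := hp s (Fin.init y) (y (Fin.last d))
    rw [Finset.sum_eq_single 1] at this
    · simpa using this
    · intro σ _ hσ
      -- Some two neighbouring letters of the `σ`-term do not have consecutive indices; the factor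
      -- belonging to this pair is `X - X`, as the slot between the two letters occurs twice.
      have : ∃ k k' : Fin d, k.succ = k'.castSucc ∧ (σ k).succ ≠ (σ k').castSucc := by
        by_contra hcon
        push Not at hcon
        exact hσ (perm_eq_one_of_succ σ hcon)
      obtain ⟨k, k', e, hne⟩ := this
      beta_reduce
      rw [Finset.prod_eq_zero (i := (σ k, σ k')), map_zero, smul_zero]
      · simp [s, hne]
      · simp [e]
    · simp
  refine key.of_dvd ?_
  have e : (∏ p ∈ s, (X p.1.succ - X p.2.castSucc) : MvPolynomial (Fin (d + 1)) C) =
      ∏ i : Fin d, ∏ j : Fin d, diffFactor C i.succ j.castSucc := by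
    rw [← Finset.prod_product', Finset.univ_product_univ, Finset.prod_filter]
    refine Finset.prod_congr rfl fun p _ => ?_
    unfold diffFactor
    split_ifs <;> simp_all
  rw [e, smul_eq_C_mul, smul_eq_C_mul]
  exact mul_dvd_mul_left _ (prod_dvd_discr C d)

end mult
end TRad

namespace TRad
open MvPolynomial TensorProduct

/-! ### Quotients by two-sided ideals -/

section quot
variable {C : Type*} [CommRing C] {A : Type*} [Ring A] [Algebra C A]

/-- The quotient of an algebra by a two-sided ideal. -/
abbrev QuotI (I : TwoSidedIdeal A) : Type _ := I.ringCon.Quotient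

/-- The quotient map, as an algebra homomorphism. -/
def quotMk (C : Type*) [CommRing C] {A : Type*} [Ring A] [Algebra C A] (I : TwoSidedIdeal A) :
    A →ₐ[C] QuotI I :=
  { I.ringCon.mk' with commutes' := fun _ => rfl }

theorem quotMk_eq_zero {I : TwoSidedIdeal A} {a : A} : quotMk C I a = 0 ↔ a ∈ I := by
  have : a ∈ TwoSidedIdeal.ker I.ringCon.mk' ↔ a ∈ I := by rw [TwoSidedIdeal.ker_ringCon_mk']
  rw [← this, TwoSidedIdeal.mem_ker]
  rfl

theorem quotMk_surjective (I : TwoSidedIdeal A) : Function.Surjective (quotMk C I) :=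
  I.ringCon.mk'_surjective

end quot

/-! ### Adjoining integrality of one element -/

section step
variable {C : Type*} [CommRing C] {A : Type*} [Ring A] [Algebra C A]

/-- The map `r ⊗ a ↦ a * ev w y (r * discr)`. -/
noncomputable def evTensor (w : A) {n : ℕ} (y : Fin n → A) :
    (MvPolynomial (Fin n) C) ⊗[C] A →ₗ[C] A :=
  TensorProduct.lift (LinearMap.mk₂ C (fun r a => a * ev w y (r * discr C n))
    (fun r s a => by rw [add_mul, map_add, mul_add])
    (fun c r a => by rw [smul_mul_assoc, map_smul, mul_smul_comm])
    (fun r a b => by rw [add_mul])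
    (fun c r a => by rw [smul_mul_assoc]))

theorem evTensor_tmul (w : A) {n : ℕ} (y : Fin n → A) (r : MvPolynomial (Fin n) C) (a : A) :
    evTensor w y (r ⊗ₜ[C] a) = a * ev w y (r * discr C n) := by
  simp [evTensor]

theorem evTensor_aeval (w : A) {n : ℕ} (y : Fin n → A) (r r' : MvPolynomial (Fin n) C) (a b : A)
    (g : Polynomial (MvPolynomial (Fin n) C)) :
    evTensor w y ((r ⊗ₜ[C] a) * Polynomial.aeval (1 ⊗ₜ[C] w : (MvPolynomial (Fin n) C) ⊗[C] A) g *
        (r' ⊗ₜ[C] b)) =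
      a * ev w (Fin.cons b y) (rename Fin.succ (r * r') * (rename Fin.succ (discr C n) *
        g.eval₂ ((rename Fin.succ : _ →ₐ[C] MvPolynomial (Fin (n + 1)) C) :
          _ →+* MvPolynomial (Fin (n + 1)) C) (X 0))) := by
  induction g using Polynomial.induction_on' with
  | add p q hp hq =>
    rw [map_add, mul_add, add_mul, map_add, hp, hq, Polynomial.eval₂_add, mul_add, mul_add, map_add,
      mul_add]
  | monomial j c =>
    rw [Polynomial.aeval_monomial, Algebra.TensorProduct.algebraMap_apply, Algebra.algebraMap_self,
      RingHom.id_apply, Algebra.TensorProduct.tmul_pow, one_pow,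
      Algebra.TensorProduct.tmul_mul_tmul, Algebra.TensorProduct.tmul_mul_tmul,
      Algebra.TensorProduct.tmul_mul_tmul, evTensor_tmul, Polynomial.eval₂_monomial]
    have : (rename Fin.succ (r * r') * (rename Fin.succ (discr C n) *
        ((rename Fin.succ : _ →ₐ[C] MvPolynomial (Fin (n + 1)) C) c * X 0 ^ j))) =
        X 0 ^ j * rename Fin.succ (r * c * r' * discr C n) := by
      simp only [map_mul]
      ring
    rw [RingHom.coe_coe, this, ev_cons]
    simp [mul_assoc]

/-- If the discriminant in `n + 1` variables kills `w`, then `w` becomes integral of degree at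
most `2 n` after extending scalars to a polynomial ring and dividing out an ideal whose
contraction annihilates the values of the discriminant in `n` variables. -/
theorem exists_integral_extension {C : Type u} [CommRing C] {A : Type u} [Ring A] [Algebra C A]
    (w : A) (n : ℕ) (h : Kills w (discr C (n + 1))) :
    ∃ (B : Type u) (_ : Ring B) (_ : Algebra (MvPolynomial (Fin n) C) B) (φ : A →+* B),
      (∀ (c : C) (a : A), φ (c • a) = (MvPolynomial.C c : MvPolynomial (Fin n) C) • φ a) ∧
      Submodule.span (MvPolynomial (Fin n) C) (Set.range φ) = ⊤ ∧
      (∃ g : Polynomial (MvPolynomial (Fin n) C), g.Monic ∧ g.natDegree ≤ 2 * n ∧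
        Polynomial.aeval (φ w) g = 0) ∧
      ∀ a, φ a = 0 → ∀ y : Fin n → A, a * ev w y (discr C n) = 0 := by
  let R := MvPolynomial (Fin n) C
  let S := R ⊗[C] A
  let q : TwoSidedIdeal S := TwoSidedIdeal.mk'
    {t | ∀ (u v : S) (y : Fin n → A), evTensor w y (u * t * v) = 0}
    (fun u v y => by simp)
    (fun {s t} hs ht u v y => by simp [mul_add, add_mul, hs u v y, ht u v y])
    (fun {s} hs u v y => by
      have e : u * -s * v = -(u * s * v) :=
        (congrArg (· * v) (mul_neg u s)).trans (neg_mul (u * s) v)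
      exact (congrArg _ e).trans ((map_neg _ _).trans (neg_eq_zero.2 (hs u v y))))
    (fun {s t} ht u v y => by rw [← mul_assoc]; exact ht _ _ _)
    (fun {s t} hs u v y => by rw [← mul_assoc, mul_assoc]; exact hs _ _ _)
  have hq : ∀ t, t ∈ q ↔ ∀ (u v : S) (y : Fin n → A), evTensor w y (u * t * v) = 0 := fun t => by
    simp only [q]; rw [TwoSidedIdeal.mem_mk']; rfl
  let i : A →+* S := (Algebra.TensorProduct.includeRight : A →ₐ[C] S)
  have hi : ∀ a, i a = 1 ⊗ₜ[C] a := fun a => rfl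
  let g₀ : Polynomial R := ∏ i : Fin n, (Polynomial.X - Polynomial.C (X i))
  have hg₀ : g₀.Monic := Polynomial.monic_prod_of_monic _ _ fun i _ => Polynomial.monic_X_sub_C _
  refine ⟨QuotI q, inferInstance, inferInstance, (quotMk R q : S →+* QuotI q).comp i, ?_, ?_, ?_, ?_⟩
  · intro c a
    have : i (c • a) = (MvPolynomial.C c : R) • i a := by
      rw [hi, hi, ← TensorProduct.smul_tmul, TensorProduct.smul_tmul', smul_eq_mul, mul_one,
        ← algebraMap_eq, Algebra.algebraMap_eq_smul_one]
    rw [RingHom.comp_apply, this]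
    exact map_smul (quotMk R q) _ _
  · rw [eq_top_iff]
    intro t _
    obtain ⟨s, rfl⟩ := quotMk_surjective (C := R) q t
    induction s using TensorProduct.induction_on with
    | zero => rw [map_zero]; exact Submodule.zero_mem _
    | add s t hs ht => rw [map_add]; exact Submodule.add_mem _ (hs trivial) (ht trivial)
    | tmul r a =>
      have : (r ⊗ₜ[C] a : S) = r • i a := by
        rw [hi, TensorProduct.smul_tmul', smul_eq_mul, mul_one]
      rw [this, map_smul]
      exact Submodule.smul_mem _ _ (Submodule.subset_span ⟨a, rfl⟩)
  · refine ⟨g₀ ^ 2, hg₀.pow 2, ?_, ?_⟩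
    · refine Polynomial.natDegree_pow_le.trans (Nat.mul_le_mul_left _ ?_)
      refine (Polynomial.natDegree_prod_le _ _).trans ?_
      refine (Finset.sum_le_card_nsmul _ _ 1 fun i _ => Polynomial.natDegree_X_sub_C_le _).trans ?_
      simp
    · have : Polynomial.aeval (quotMk R q (i w)) (g₀ ^ 2) =
          quotMk R q (Polynomial.aeval (i w) (g₀ ^ 2)) :=
        Polynomial.aeval_algHom_apply _ _ _
      refine this.trans (quotMk_eq_zero.2 ?_)
      rw [hq]
      intro u v y
      induction u using TensorProduct.induction_on with
      | zero => simp
      | add u u' hu hu' => rw [add_mul, add_mul, map_add, hu, hu', add_zero]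
      | tmul r a =>
        induction v using TensorProduct.induction_on with
        | zero => simp
        | add u u' hu hu' => rw [mul_add, map_add, hu, hu', add_zero]
        | tmul r' b =>
          rw [hi, evTensor_aeval]
          have e : (g₀ ^ 2).eval₂ ((rename Fin.succ : _ →ₐ[C] MvPolynomial (Fin (n + 1)) C) :
              _ →+* MvPolynomial (Fin (n + 1)) C) (X 0) = (∏ i : Fin n, (X 0 - X i.succ)) ^ 2 := by
            rw [Polynomial.eval₂_pow, Polynomial.eval₂_finsetProd]
            congr 1
            refine Finset.prod_congr rfl fun i _ => ?_
            rw [Polynomial.eval₂_sub, Polynomial.eval₂_X, Polynomial.eval₂_C, RingHom.coe_coe]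
            exact congrArg (X 0 - ·) (rename_X Fin.succ i)
          rw [e]
          have hk := h.of_dvd (q := rename Fin.succ (r * r') * (rename Fin.succ (discr C n) *
            (∏ i : Fin n, (X 0 - X i.succ)) ^ 2)) (by
              refine Dvd.dvd.mul_left ?_ _
              rw [discr_succ]
              exact (IsUnit.mul_left_dvd (isUnit_one.neg.pow n)).2 dvd_rfl)
          rw [hk, mul_zero]
  · intro a ha y
    have : i a ∈ q := quotMk_eq_zero (C := R).1 ha
    have := (hq _).1 this 1 1 y
    rwa [one_mul, mul_one, hi, evTensor_tmul, one_mul] at this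

end step
end TRad

namespace TRad

/-! ### Shirshov's theorem on words -/

section shirshov

/-- `u` is smaller than `v` at the first position where they differ; unlike for the
lexicographic order, a proper prefix is not comparable to the whole word. -/
def StrictLex {X : Type*} [LT X] (u v : List X) : Prop :=
  ∃ p a b s t, u = p ++ a :: s ∧ v = p ++ b :: t ∧ a < b

theorem StrictLex.append {X : Type*} [LT X] {u v : List X} (h : StrictLex u v)
    (p s t : List X) : StrictLex (p ++ u ++ s) (p ++ v ++ t) := by
  obtain ⟨q, a, b, s', t', rfl, rfl, hab⟩ := h
  exact ⟨p ++ q, a, b, s' ++ s, t' ++ t, by simp, by simp, hab⟩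

theorem StrictLex.lt {X : Type*} [LinearOrder X] {u v : List X} (h : StrictLex u v) : u < v := by
  obtain ⟨q, a, b, s', t', rfl, rfl, hab⟩ := h
  exact List.append_left_lt (List.cons_lt_cons_iff.2 (Or.inl hab))

theorem strictLex_or_append {X : Type*} [LinearOrder X] {u v : List X} (h : u < v) :
    StrictLex u v ∨ ∃ e s, v = u ++ e :: s := by
  induction u generalizing v with
  | nil =>
    cases v with
    | nil => exact absurd h (lt_irrefl _)
    | cons e s => exact Or.inr ⟨e, s, rfl⟩
  | cons a u ih =>
    cases v with
    | nil => exact absurd h (List.not_lt_nil _)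
    | cons b v =>
      rcases List.cons_lt_cons_iff.1 h with h | ⟨rfl, h'⟩
      · exact Or.inl ⟨[], a, b, u, v, rfl, rfl, h⟩
      · rcases ih h' with ⟨p, c, d, s, t, rfl, rfl, hcd⟩ | ⟨e, s, rfl⟩
        · exact Or.inl ⟨a :: p, c, d, s, t, rfl, rfl, hcd⟩
        · exact Or.inr ⟨e, s, rfl⟩

/-- The words `u 0, …, u (d-1)` are nonempty and every nontrivial rearrangement of their
concatenation is smaller than the concatenation itself. -/
def Divided {X : Type*} [LT X] {d : ℕ} (u : Fin d → List X) : Prop :=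
  (∀ i, u i ≠ []) ∧ ∀ σ : Equiv.Perm (Fin d), σ ≠ 1 →
    StrictLex (List.ofFn fun i => u (σ i)).flatten (List.ofFn u).flatten

/-- The word `l` contains a `k`-th power or a `d`-divided word. -/
def Unavoidable {X : Type*} [LT X] (k d : ℕ) (l : List X) : Prop :=
  (∃ u : List X, u ≠ [] ∧ (List.replicate k u).flatten <:+: l) ∨
    ∃ u : Fin d → List X, Divided u ∧ (List.ofFn u).flatten <:+: l

theorem Unavoidable.of_isInfix {X : Type*} [LT X] {k d : ℕ} {l l' : List X}
    (h : Unavoidable k d l) (hl : l <:+: l') : Unavoidable k d l' := by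
  rcases h with ⟨u, hu, h⟩ | ⟨u, hu, h⟩
  · exact Or.inl ⟨u, hu, h.trans hl⟩
  · exact Or.inr ⟨u, hu, h.trans hl⟩

/-- A block for the letter `x`: a nonempty word in smaller letters followed by a positive power
of `x`. -/
def IsBlock {X : Type*} [LT X] (x : X) (b : List X) : Prop :=
  ∃ v i, v ≠ [] ∧ (∀ a ∈ v, a < x) ∧ b = v ++ List.replicate (i + 1) x

/-- A word in letters `≤ x` is a power of `x`, followed by blocks, followed by a word in letters
`< x`. -/
theorem exists_blocks {X : Type*} [LinearOrder X] (x : X) (l : List X) (hl : ∀ a ∈ l, a ≤ x) :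
    ∃ (i : ℕ) (bs : List (List X)) (t : List X), (∀ b ∈ bs, IsBlock x b) ∧ (∀ a ∈ t, a < x) ∧
      l = List.replicate i x ++ bs.flatten ++ t := by
  induction l with
  | nil => exact ⟨0, [], [], by simp⟩
  | cons a l ih =>
    obtain ⟨i, bs, t, hbs, ht, rfl⟩ := ih fun b hb => hl b (List.mem_cons_of_mem _ hb)
    rcases (hl a (List.mem_cons_self ..)).eq_or_lt with rfl | ha
    · exact ⟨i + 1, bs, t, hbs, ht, by simp [List.replicate_succ]⟩
    cases i with
    | zero =>
      cases bs with
      | nil => exact ⟨0, [], a :: t, by simp, by simpa using ⟨ha, ht⟩, by simp⟩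
      | cons b bs =>
        obtain ⟨v, j, hv, hv', rfl⟩ := hbs b (List.mem_cons_self ..)
        refine ⟨0, ((a :: v) ++ List.replicate (j + 1) x) :: bs, t, ?_, ht, by simp⟩
        intro c hc
        rcases List.mem_cons.1 hc with rfl | hc
        · exact ⟨a :: v, j, by simp, by simpa using ⟨ha, hv'⟩, rfl⟩
        · exact hbs c (List.mem_cons_of_mem _ hc)
    | succ i =>
      refine ⟨0, ([a] ++ List.replicate (i + 1) x) :: bs, t, ?_, ht, by simp⟩
      intro c hc
      rcases List.mem_cons.1 hc with rfl | hc
      · exact ⟨[a], i, by simp, by simpa using ha, rfl⟩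
      · exact hbs c hc

theorem IsBlock.exists_cons {X : Type*} [LT X] {x : X} {b : List X} (h : IsBlock x b) :
    ∃ a s, a < x ∧ b = a :: s := by
  obtain ⟨v, j, hv, hv', rfl⟩ := h
  cases v with
  | nil => exact absurd rfl hv
  | cons a v => exact ⟨a, _, hv' a (List.mem_cons_self ..), rfl⟩

theorem IsBlock.exists_concat {X : Type*} [LT X] {x : X} {b : List X} (h : IsBlock x b) :
    ∃ s, b = s ++ [x] := by
  obtain ⟨v, j, hv, hv', rfl⟩ := h
  exact ⟨v ++ List.replicate j x, by simp [List.replicate_succ']⟩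

/-- If a block is a proper prefix of another, the next letter is `x`. -/
theorem IsBlock.eq_of_append {X : Type*} [LinearOrder X] {x : X} {b c s : List X} {e : X}
    (hb : IsBlock x b) (hc : IsBlock x c) (h : c = b ++ e :: s) : e = x := by
  obtain ⟨v, j, hv, hv', rfl⟩ := hb
  obtain ⟨v', j', hw, hw', rfl⟩ := hc
  induction v generalizing v' with
  | nil => exact absurd rfl hv
  | cons a v ih =>
    cases v' with
    | nil => exact absurd rfl hw
    | cons a' v' =>
      simp only [List.cons_append, List.cons.injEq] at h
      obtain ⟨rfl, h⟩ := h
      by_cases hv0 : v = []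
      · subst hv0
        cases v' with
        | nil =>
          have : e ∈ List.replicate (j' + 1) x := by
            simp only [List.nil_append] at h
            rw [h]
            simp
          exact List.eq_of_mem_replicate this
        | cons a'' v' =>
          exfalso
          simp only [List.nil_append, List.replicate_succ, List.cons_append,
            List.cons.injEq] at h
          have := hw' a'' (by simp)
          exact absurd h.1 this.ne
      by_cases hw0 : v' = []
      · subst hw0
        exfalso
        cases v with
        | nil => exact hv0 rfl
        | cons a'' v =>
          simp only [List.nil_append, List.replicate_succ, List.cons_append,
            List.cons.injEq] at h
          have := hv' a'' (by simp)
          exact absurd h.1.symm this.ne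
      exact ih hv0 (fun b hb => hv' b (List.mem_cons_of_mem _ hb)) v' hw0
        (fun b hb => hw' b (List.mem_cons_of_mem _ hb)) h

theorem flatten_pow {X : Type*} (k : ℕ) (u : List (List X)) :
    (List.replicate k u).flatten.flatten = (List.replicate k u.flatten).flatten := by
  rw [List.flatten_flatten, List.map_replicate]

theorem flatten_isInfix {X : Type*} {l l' : List (List X)} (h : l <:+: l') :
    l.flatten <:+: l'.flatten := by
  obtain ⟨p, s, rfl⟩ := h
  exact ⟨p.flatten, s.flatten, by simp⟩

/-- Comparing words in blocks gives a comparison of the underlying words of equal length. -/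
theorem StrictLex.flatten {X : Type*} [LinearOrder X] {x : X} {u v : List (List X)}
    (hu : ∀ b ∈ u, IsBlock x b) (hv : ∀ b ∈ v, IsBlock x b)
    (hlen : u.flatten.length = v.flatten.length) (h : StrictLex u v) :
    StrictLex u.flatten v.flatten := by
  obtain ⟨p, b, c, s, t, rfl, rfl, hbc⟩ := h
  have hb := hu b (by simp)
  have hc := hv c (by simp)
  rcases strictLex_or_append hbc with h | ⟨e, r, h⟩
  · simpa using h.append p.flatten s.flatten t.flatten
  · have he := hb.eq_of_append hc h
    subst he
    cases s with
    | nil =>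
      exfalso
      simp [h] at hlen
    | cons b' s =>
      obtain ⟨a, s', ha, rfl⟩ := (hu b' (by simp)).exists_cons
      exact ⟨p.flatten ++ b, a, e, s' ++ s.flatten, r ++ t.flatten, by simp, by simp [h], ha⟩

theorem length_flatten_perm {X : Type*} {d : ℕ} (u : Fin d → List X) (σ : Equiv.Perm (Fin d)) :
    (List.ofFn fun i => u (σ i)).flatten.length = (List.ofFn u).flatten.length := by
  simp only [List.length_flatten, List.map_ofFn, List.sum_ofFn, Function.comp_def]
  exact Equiv.sum_comp σ fun i => (u i).length

theorem flatten_ofFn_flatten {X : Type*} {d : ℕ} (u : Fin d → List (List X)) :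
    (List.ofFn fun i => (u i).flatten).flatten = (List.ofFn u).flatten.flatten := by
  rw [List.flatten_flatten, List.map_ofFn]
  rfl

/-- A `d`-divided word in blocks gives a `d + 1`-divided word, after prepending `x`. -/
theorem Divided.cons {X : Type*} [LinearOrder X] {x : X} {d : ℕ} {u : Fin d → List (List X)}
    (hu : ∀ i, ∀ b ∈ u i, IsBlock x b) (h : Divided u) :
    Divided (Fin.cons (α := fun _ => List X) [x] fun i => (u i).flatten) := by
  have hcons : ∀ i, ∃ a s, a < x ∧ (u i).flatten = a :: s := by
    intro i
    cases hi : u i with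
    | nil => exact absurd hi (h.1 i)
    | cons b bs =>
      obtain ⟨a, s, ha, rfl⟩ := (hu i b (by simp [hi])).exists_cons
      exact ⟨a, s ++ bs.flatten, ha, by simp⟩
  refine ⟨fun i => ?_, fun σ hσ => ?_⟩
  · refine Fin.cases ?_ (fun i => ?_) i
    · simp
    · obtain ⟨a, s, -, e⟩ := hcons i
      simp only [Fin.cons_succ, e]
      simp
  · obtain ⟨⟨p, τ⟩, rfl⟩ := Equiv.Perm.decomposeFin.symm.surjective σ
    rw [List.ofFn_succ, List.ofFn_succ (f := Fin.cons (α := fun _ => List X) [x] _)]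
    simp only [Equiv.Perm.decomposeFin_symm_apply_zero, Equiv.Perm.decomposeFin_symm_apply_succ,
      Fin.cons_zero, Fin.cons_succ, List.flatten_cons]
    revert hσ
    refine Fin.cases (fun hσ => ?_) (fun i hσ => ?_) p
    · have hτ : τ ≠ 1 := by
        rintro rfl
        apply hσ
        ext i
        refine Fin.cases ?_ (fun i => ?_) i <;> simp
      simp only [Equiv.swap_self, Equiv.refl_apply, Fin.cons_succ, Fin.cons_zero]
      have key := h.2 τ hτ
      have mem : ∀ τ : Equiv.Perm (Fin d), ∀ b ∈ (List.ofFn fun i => u (τ i)).flatten,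
          IsBlock x b := by
        intro τ b hb
        rw [List.mem_flatten] at hb
        obtain ⟨l, hl, hb⟩ := hb
        rw [List.mem_ofFn] at hl
        obtain ⟨i, rfl⟩ := hl
        exact hu _ b hb
      have := StrictLex.flatten (mem τ) (mem 1) (by
        simp only [Equiv.Perm.one_apply]
        rw [← flatten_ofFn_flatten, ← flatten_ofFn_flatten]
        exact length_flatten_perm (fun i => (u i).flatten) τ) key
      rw [flatten_ofFn_flatten (fun i => u (τ i)), flatten_ofFn_flatten]
      simpa using this.append [x] [] []
    · obtain ⟨a, s, ha, e⟩ := hcons i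
      simp only [Fin.cons_succ, e]
      exact ⟨[], a, x, _, _, rfl, rfl, ha⟩

theorem finite_words {X : Type*} (S : Finset X) (n : ℕ) :
    {l : List X | (∀ a ∈ l, a ∈ S) ∧ l.length ≤ n}.Finite := by
  refine ((List.finite_length_le {a // a ∈ S} n).image (List.map Subtype.val)).subset ?_
  rintro l ⟨h1, h2⟩
  refine ⟨l.attach.map fun a => ⟨a.1, h1 _ a.2⟩, ?_, ?_⟩
  · simpa using h2
  · simp

/-- Shirshov's theorem: over a finite ordered alphabet, long words contain a `k`-th power or a
`d`-divided word. The induction is on `d` and, for fixed `d`, on the alphabet with its largest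
letter `x` removed. If `l` avoids both patterns, its factors without `x` and its powers of `x` are
short, so `l` has many blocks, of which only finitely many different ones occur; the case `d - 1`
then applies to `l` as a word whose letters are blocks. -/
theorem shirshov (k d : ℕ) (hk : 1 ≤ k) : ∀ (X : Type) [LinearOrder X] (S : Finset X),
    ∃ N, ∀ l : List X, (∀ a ∈ l, a ∈ S) → N ≤ l.length → Unavoidable k d l := by
  induction d with
  | zero =>
    intro X _ S
    refine ⟨0, fun l _ _ => Or.inr ⟨Fin.elim0, ⟨fun i => i.elim0, fun σ hσ => ?_⟩, by simp⟩⟩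
    exact absurd (Subsingleton.elim σ 1) hσ
  | succ d ihd =>
    intro X _ S
    induction S using Finset.induction_on_max with
    | empty =>
      refine ⟨1, fun l hl h => ?_⟩
      cases l with
      | nil => simp at h
      | cons a l => simpa using hl a
    | insert x S hx ih =>
      obtain ⟨N₁, hN₁⟩ := ih
      obtain ⟨N₂, hN₂⟩ := ihd (List X) (finite_words (insert x S) (N₁ + k)).toFinset
      refine ⟨k + (N₂ + 1) * (N₁ + k) + N₁, fun l hl hlen => ?_⟩
      by_contra hcon
      have hS : ∀ v : List X, (∀ a ∈ v, a < x) → v <:+: l → v.length < N₁ := by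
        intro v hv hvl
        by_contra hv'
        refine hcon ((hN₁ v (fun a ha => ?_) (not_lt.1 hv')).of_isInfix hvl)
        exact (Finset.mem_insert.1 (hl a (hvl.subset ha))).resolve_left (hv a ha).ne
      have hX : ∀ i, List.replicate i x <:+: l → i < k := by
        intro i hi
        by_contra hik
        refine hcon (Or.inl ⟨[x], by simp, List.IsInfix.trans ?_ hi⟩)
        obtain ⟨j, rfl⟩ := Nat.exists_eq_add_of_le (not_lt.1 hik)
        refine ⟨[], List.replicate j x, ?_⟩
        have : (List.replicate k [x]).flatten = List.replicate k x := by
          simp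
        rw [this]
        simp
      obtain ⟨i, bs, t, hbs, ht, e⟩ := exists_blocks x l fun a ha => by
        rcases Finset.mem_insert.1 (hl a ha) with h | h
        · exact h.le
        · exact (hx a h).le
      have hi : i < k := hX i ⟨[], bs.flatten ++ t, by simp [e]⟩
      have ht' : t.length < N₁ := hS t ht ⟨List.replicate i x ++ bs.flatten, [], by simp [e]⟩
      have hbl : bs.flatten <:+: l := ⟨List.replicate i x, t, e.symm⟩
      have hb1 : ∀ b ∈ bs, b <:+: l := fun b hb =>
        (by
          obtain ⟨p, s, rfl⟩ := List.append_of_mem hb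
          exact ⟨p.flatten, s.flatten, by simp⟩ : b <:+: bs.flatten).trans hbl
      have hb2 : ∀ b ∈ bs, b.length ≤ N₁ + k := by
        intro b hb
        have hb1 := hb1 b hb
        obtain ⟨v, j, hv, hv', rfl⟩ := hbs b hb
        have h1 := hS v hv' (List.IsInfix.trans ⟨[], _, by simp; rfl⟩ hb1)
        have h2 := hX (j + 1) (List.IsInfix.trans ⟨v, [], by simp⟩ hb1)
        simp only [List.length_append, List.length_replicate]
        omega
      have hlen2 : bs.flatten.length ≤ bs.length * (N₁ + k) := by
        rw [List.length_flatten, ← List.length_map (f := List.length)]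
        apply List.sum_le_card_nsmul
        simpa using hb2
      have hcount : N₂ + 1 < bs.length := by
        have := congrArg List.length e
        simp only [List.length_append, List.length_replicate] at this
        by_contra hc
        have := Nat.mul_le_mul_right (N₁ + k) (not_lt.1 hc)
        omega
      cases bs with
      | nil => simp at hcount
      | cons b₀ bs =>
        -- The first block is kept aside, so that any block found in `bs` is preceded by an `x`.
        have := hN₂ bs (fun b hb => by
          have hb' := List.mem_cons_of_mem b₀ hb
          rw [Set.Finite.mem_toFinset]
          exact ⟨fun a ha => hl a ((hb1 b hb').subset ha), hb2 b hb'⟩)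
          (by simp at hcount; omega)
        rcases this with ⟨u, hu, h⟩ | ⟨u, hu, h⟩
        · have huF : u.flatten ≠ [] := by
            cases u with
            | nil => exact absurd rfl hu
            | cons b u =>
              have : b ∈ bs := h.subset (by
                rw [List.mem_flatten]
                exact ⟨b :: u, by simp; omega, by simp⟩)
              obtain ⟨a, s, -, rfl⟩ := (hbs b (List.mem_cons_of_mem _ this)).exists_cons
              simp
          refine hcon (Or.inl ⟨u.flatten, huF, ?_⟩)
          rw [← flatten_pow]
          refine (flatten_isInfix h).trans (List.IsInfix.trans ?_ hbl)
          exact ⟨b₀, [], by simp⟩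
        · have hub : ∀ i, ∀ b ∈ u i, IsBlock x b := fun i b hb =>
            hbs b (List.mem_cons_of_mem _ (h.subset (by
              rw [List.mem_flatten]
              exact ⟨u i, List.mem_ofFn.2 ⟨i, rfl⟩, hb⟩)))
          refine hcon (Or.inr ⟨_, hu.cons hub, List.IsInfix.trans ?_ hbl⟩)
          rw [List.ofFn_succ]
          simp only [Fin.cons_zero, Fin.cons_succ, List.flatten_cons]
          rw [flatten_ofFn_flatten]
          obtain ⟨p, s, rfl⟩ := h
          obtain ⟨p', c, hp⟩ : ∃ p' c, b₀ :: p = p' ++ [c] :=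
            ⟨_, _, (List.dropLast_append_getLast (List.cons_ne_nil b₀ p)).symm⟩
          have hc : IsBlock x c := hbs c (by
            have : c ∈ b₀ :: p := by rw [hp]; simp
            rw [List.append_assoc, ← List.cons_append]
            exact List.mem_append_left _ this)
          -- `c` is the block just before the divided word; its last letter is the `x` to prepend.
          obtain ⟨c', rfl⟩ := hc.exists_concat
          refine ⟨p'.flatten ++ c', s.flatten, ?_⟩
          have := congrArg List.flatten hp
          simp only [List.flatten_cons, List.flatten_append, List.flatten_nil] at this ⊢
          simp only [← List.append_assoc, this]
          simp

end shirshov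
end TRad

namespace TRad

/-! ### Shirshov's finiteness criterion -/

section finite
variable {C : Type*} [CommRing C] {A : Type*} [Ring A] [Algebra C A] {r : ℕ}

/-- The value of a word in the generators `a`. -/
def wordVal (a : Fin r → A) (l : List (Fin r)) : A := (l.map a).prod

theorem wordVal_append (a : Fin r → A) (l l' : List (Fin r)) :
    wordVal a (l ++ l') = wordVal a l * wordVal a l' := by
  simp [wordVal]

theorem wordVal_pow (a : Fin r → A) (l : List (Fin r)) (j : ℕ) :
    wordVal a (List.replicate j l).flatten = wordVal a l ^ j := by
  simp [wordVal, List.map_flatten, List.prod_flatten]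

theorem wordVal_flatten (a : Fin r → A) {d : ℕ} (u : Fin d → List (Fin r)) :
    wordVal a (List.ofFn u).flatten = (List.ofFn fun i => wordVal a (u i)).prod := by
  simp only [wordVal, List.map_flatten, List.prod_flatten, List.map_ofFn]
  rfl

/-- An element is integral of degree at most `k` over `C`. -/
def IntegralDeg (C : Type*) [CommRing C] {A : Type*} [Ring A] [Algebra C A] (k : ℕ) (w : A) :
    Prop :=
  ∃ g : Polynomial C, g.Monic ∧ g.natDegree ≤ k ∧ Polynomial.aeval w g = 0

theorem IntegralDeg.pow_eq {k : ℕ} {w : A} (h : IntegralDeg C k w) :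
    ∃ c : ℕ → C, w ^ k = ∑ j ∈ Finset.range k, c j • w ^ j := by
  rcases subsingleton_or_nontrivial C with hC | hC
  · have := Module.subsingleton C A
    exact ⟨0, Subsingleton.elim _ _⟩
  obtain ⟨g, hg, hd, hw⟩ := h
  let f := g * Polynomial.X ^ (k - g.natDegree)
  have hf : f.Monic := hg.mul (Polynomial.monic_X_pow _)
  have hfd : f.natDegree = k := by
    rw [hg.natDegree_mul (Polynomial.monic_X_pow _), Polynomial.natDegree_X_pow]
    omega
  have hfw : Polynomial.aeval w f = 0 := by simp [f, hw]
  rw [hf.as_sum, hfd] at hfw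
  refine ⟨fun j => - f.coeff j, ?_⟩
  simp only [map_add, map_pow, Polynomial.aeval_X, map_sum, map_mul, Polynomial.aeval_C] at hfw
  simp only [neg_smul, Finset.sum_neg_distrib]
  simp only [Algebra.smul_def]
  exact eq_neg_of_add_eq_zero_left hfw

/-- Words of length `< N` span `A`: a longer word contains a `k`-th power, which integrality
replaces by shorter words, or a `d`-divided word, which the identity replaces by words of the same
length that are lexicographically smaller. -/
theorem finite_of_shirshov {d k N : ℕ} (a : Fin r → A)
    (ha : Algebra.adjoin C (Set.range a) = ⊤) {α : Equiv.Perm (Fin d) → C} (hα : MultId A α)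
    (hα1 : α 1 = 1) (hk : 1 ≤ k)
    (hN : ∀ l : List (Fin r), N ≤ l.length → Unavoidable k d l)
    (hdeg : ∀ l : List (Fin r), l.length ≤ N → IntegralDeg C k (wordVal a l)) :
    Module.Finite C A := by
  let M : Submodule C A := Submodule.span C (wordVal a '' {l | l.length < N})
  have key : ∀ n, ∀ l : List (Fin r), l.length = n → wordVal a l ∈ M := by
    intro n
    induction n using Nat.strong_induction_on with
    | _ n ihn =>
    intro l hl
    refine Set.WellFoundedOn.induction (P := fun l => wordVal a l ∈ M)
      ((List.finite_length_eq (Fin r) n).wellFoundedOn (r := (· < ·))) hl ?_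
    clear hl l
    intro l hl ihl
    have hl : l.length = n := hl
    by_cases hlN : l.length < N
    · exact Submodule.subset_span ⟨l, hlN, rfl⟩
    have hun := hN (l.take N) (by simp; omega)
    have htake : l.take N <:+: l := (List.take_prefix N l).isInfix
    rcases hun with ⟨u, hu, h⟩ | ⟨u, hu, h⟩
    · have hul : u.length ≤ N := by
        have h1 : u <:+: (List.replicate k u).flatten := by
          obtain ⟨j, rfl⟩ := Nat.exists_eq_add_of_le hk
          rw [add_comm, List.replicate_succ]
          exact ⟨[], (List.replicate j u).flatten, by simp⟩
        exact ((h1.trans h).length_le).trans (by simp)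
      obtain ⟨c, hc⟩ := (hdeg u hul).pow_eq
      obtain ⟨p, s, e⟩ := h.trans htake
      rw [← e, wordVal_append, wordVal_append, wordVal_pow, hc, Finset.mul_sum, Finset.sum_mul]
      refine Submodule.sum_mem _ fun j hj => ?_
      rw [mul_smul_comm, smul_mul_assoc, ← wordVal_pow, ← wordVal_append, ← wordVal_append]
      refine Submodule.smul_mem _ _ (ihn _ ?_ _ rfl)
      have h2 := congrArg List.length e
      have h3 : j * u.length < k * u.length :=
        Nat.mul_lt_mul_of_pos_right (Finset.mem_range.1 hj) (List.length_pos_iff.2 hu)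
      simp at h2 ⊢
      omega
    · obtain ⟨p, s, e⟩ := h.trans htake
      have hid := hα fun i => wordVal a (u i)
      rw [← Finset.add_sum_erase _ _ (Finset.mem_univ 1), hα1, one_smul] at hid
      have hid' := eq_neg_of_add_eq_zero_left hid
      simp only [Equiv.Perm.one_apply] at hid'
      rw [← e, wordVal_append, wordVal_append, wordVal_flatten, hid', mul_neg, neg_mul,
        Finset.mul_sum, Finset.sum_mul]
      refine Submodule.neg_mem _ (Submodule.sum_mem _ fun σ hσ => ?_)
      rw [mul_smul_comm, smul_mul_assoc, ← wordVal_flatten a fun i => u (σ i), ← wordVal_append,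
        ← wordVal_append]
      refine Submodule.smul_mem _ _ (ihl _ ?_ ?_)
      · have h2 := congrArg List.length e
        have h3 := length_flatten_perm u σ
        change List.length _ = n
        rw [List.length_append, List.length_append] at h2 ⊢
        omega
      · rw [← e]
        exact ((hu.2 σ (Finset.ne_of_mem_erase hσ)).append p s s).lt
  have htop : M = ⊤ := by
    rw [eq_top_iff, ← Algebra.top_toSubmodule, ← ha, Algebra.adjoin_eq_span, Submodule.span_le]
    intro x hx
    obtain ⟨L, hL, rfl⟩ := Submonoid.exists_list_of_mem_closure hx
    have : ∃ l : List (Fin r), L = l.map a := by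
      clear hx
      induction L with
      | nil => exact ⟨[], rfl⟩
      | cons y L ih =>
        obtain ⟨i, hi⟩ := hL y (List.mem_cons_self ..)
        obtain ⟨l, hl⟩ := ih fun z hz => hL z (List.mem_cons_of_mem _ hz)
        exact ⟨i :: l, by simp [hi, hl]⟩
    obtain ⟨l, rfl⟩ := this
    exact key _ l rfl
  exact ⟨⟨_, by
    rw [Set.Finite.coe_toFinset ((List.finite_length_lt (Fin r) N).image _)]
    exact htop⟩⟩

end finite
end TRad

namespace TRad
open MvPolynomial

/-! ### Affine algebras with a monic multilinear identity -/

section transfer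
variable {C : Type*} [CommRing C] {A : Type*} [Ring A] [Algebra C A]

theorem IntegralDeg.map {R : Type*} [CommRing R] {B : Type*} [Ring B] [Algebra R B] (ι : C →+* R)
    (φ : A →+* B) (hφ : ∀ (c : C) (a : A), φ (c • a) = ι c • φ a) {k : ℕ} {w : A}
    (h : IntegralDeg C k w) : IntegralDeg R k (φ w) := by
  obtain ⟨g, hg, hd, hw⟩ := h
  refine ⟨g.map ι, hg.map ι, Polynomial.natDegree_map_le.trans hd, ?_⟩
  rw [Polynomial.aeval_def, Polynomial.eval₂_map]
  have h1 : φ (Polynomial.aeval w g) = 0 := by rw [hw, map_zero]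
  rw [Polynomial.aeval_def, Polynomial.hom_eval₂] at h1
  convert h1 using 2
  ext c
  have := hφ c 1
  simp only [map_one, Algebra.smul_def, mul_one] at this
  exact this.symm

/-- Multilinear identities extend to the algebra generated over a larger central subring. -/
theorem MultId.extend {R : Type*} [CommRing R] {B : Type*} [Ring B] [Algebra R B] (ι : C →+* R)
    (φ : A →+* B) (hφ : ∀ (c : C) (a : A), φ (c • a) = ι c • φ a)
    (hspan : Submodule.span R (Set.range φ) = ⊤) {d : ℕ} {α : Equiv.Perm (Fin d) → C}
    (h : MultId A α) : MultId B fun σ => ι (α σ) := by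
  let F : MultilinearMap R (fun _ : Fin d => B) B :=
    ∑ σ : Equiv.Perm (Fin d), ι (α σ) • (MultilinearMap.mkPiAlgebraFin R d B).domDomCongr σ
  have hF : ∀ x, F x = ∑ σ, ι (α σ) • (List.ofFn fun i => x (σ i)).prod := fun x => by
    simp [F]
  have key : ∀ s : Finset (Fin d), ∀ x : Fin d → B, (∀ i ∉ s, x i ∈ Set.range φ) → F x = 0 := by
    intro s
    induction s using Finset.induction_on with
    | empty =>
      intro x hx
      choose y hy using fun i => hx i (by simp)
      obtain rfl : (fun i => φ (y i)) = x := funext hy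
      have := congrArg φ (h y)
      rw [map_zero, map_sum] at this
      rw [hF, ← this]
      refine Finset.sum_congr rfl fun σ _ => ?_
      rw [hφ, map_list_prod, List.map_ofFn]
      rfl
    | insert j s hj ih =>
      intro x hx
      have : ∀ t ∈ Submodule.span R (Set.range φ), F (Function.update x j t) = 0 := by
        intro t ht
        induction ht using Submodule.span_induction with
        | mem t ht =>
          refine ih _ fun i hi => ?_
          by_cases hij : i = j
          · subst hij; simpa using ht
          · rw [Function.update_of_ne hij]
            exact hx i (by simp [hi, hij])
        | zero => exact F.map_update_zero x j
        | add t t' _ _ h1 h2 => rw [F.map_update_add, h1, h2, add_zero]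
        | smul c t _ h1 => rw [F.map_update_smul, h1, smul_zero]
      have h2 := this (x j) (by rw [hspan]; trivial)
      rwa [Function.update_eq_self] at h2
  intro x
  rw [← hF]
  exact key Finset.univ x (by simp)

theorem MultId.of_surjective {B : Type*} [Ring B] [Algebra C B] (φ : A →ₐ[C] B)
    (hφ : Function.Surjective φ) {d : ℕ} {α : Equiv.Perm (Fin d) → C}
    (h : MultId A α) : MultId B α := by
  refine MultId.extend (RingHom.id C) (φ : A →+* B) (fun c a => by simp) ?_ h
  rw [show Set.range (φ : A →+* B) = Set.univ from hφ.range_eq, Submodule.span_univ]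

theorem wordVal_map {B : Type*} [Ring B] (φ : A →+* B) {r : ℕ} (a : Fin r → A)
    (l : List (Fin r)) : wordVal (φ ∘ a) l = φ (wordVal a l) := by
  simp [wordVal, map_list_prod]

theorem adjoin_map_eq_top {R : Type*} [CommRing R] {B : Type*} [Ring B] [Algebra R B] (ι : C →+* R)
    (φ : A →+* B) (hφ : ∀ (c : C) (a : A), φ (c • a) = ι c • φ a)
    (hspan : Submodule.span R (Set.range φ) = ⊤) {r : ℕ} (a : Fin r → A)
    (ha : Algebra.adjoin C (Set.range a) = ⊤) : Algebra.adjoin R (Set.range (φ ∘ a)) = ⊤ := by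
  rw [← Algebra.toSubmodule_eq_top, eq_top_iff, ← hspan, Submodule.span_le]
  rintro _ ⟨x, rfl⟩
  have hx : x ∈ Algebra.adjoin C (Set.range a) := by rw [ha]; trivial
  change φ x ∈ Algebra.adjoin R (Set.range (φ ∘ a))
  induction hx using Algebra.adjoin_induction with
  | mem x hx =>
    obtain ⟨i, rfl⟩ := hx
    exact Algebra.subset_adjoin ⟨i, rfl⟩
  | algebraMap c =>
    have := hφ c 1
    rw [← Algebra.algebraMap_eq_smul_one, map_one, ← Algebra.algebraMap_eq_smul_one] at this
    rw [this]
    exact Subalgebra.algebraMap_mem _ _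
  | add x y _ _ h1 h2 => rw [map_add]; exact add_mem h1 h2
  | mul x y _ _ h1 h2 => rw [map_mul]; exact mul_mem h1 h2

theorem CentGen.of_span {R : Type*} [CommRing R] {B : Type*} [Ring B] [Algebra R B]
    (φ : A →+* B) (hspan : Submodule.span R (Set.range φ) = ⊤) : CentGen φ := by
  intro Q a b hx t
  have ht : t ∈ Submodule.span R (Set.range φ) := by rw [hspan]; trivial
  induction ht using Submodule.span_induction with
  | mem t ht =>
    obtain ⟨x, rfl⟩ := ht
    exact hx x
  | zero => simp
  | add t t' _ _ h1 h2 => rw [mul_add, add_mul]; exact Q.add_mem h1 h2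
  | smul c t _ h1 =>
    rw [mul_smul_comm, smul_mul_assoc, Algebra.smul_def]
    exact Q.mul_mem_left _ _ h1

end transfer

universe u

/-- Induction on a list `L` containing all the short words that are not yet known to be integral of
degree at most `2 D + 1`. For the first word `u` of `L`, an inner induction on `n` treats the
algebras in which `discr n` kills `u`. -/
theorem good_of_words {D r N : ℕ}
    (hN : ∀ l : List (Fin r), N ≤ l.length → Unavoidable (2 * D + 1) D l)
    (L : List (List (Fin r))) :
    ∀ (C A : Type u) [CommRing C] [IsNoetherianRing C] [Ring A] [Algebra C A] (a : Fin r → A)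
      (α : Equiv.Perm (Fin D) → C), Algebra.adjoin C (Set.range a) = ⊤ → MultId A α → α 1 = 1 →
      (∀ l : List (Fin r), l.length ≤ N → l ∉ L → IntegralDeg C (2 * D + 1) (wordVal a l)) →
      Good A := by
  induction L with
  | nil =>
    intro C A _ _ _ _ a α ha hα hα1 hdeg
    have := finite_of_shirshov a ha hα hα1 (by omega) hN fun l hl => hdeg l hl (by simp)
    exact good_of_finite C
  | cons u L ih =>
    intro C A _ _ _ _ a α ha hα hα1 hdeg
    have inner : ∀ n, n ≤ D + 1 → ∀ (A : Type u) [Ring A] [Algebra C A] (a : Fin r → A),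
        Algebra.adjoin C (Set.range a) = ⊤ → MultId A α →
        (∀ l : List (Fin r), l.length ≤ N → l ∉ u :: L →
          IntegralDeg C (2 * D + 1) (wordVal a l)) →
        Kills (wordVal a u) (discr C n) → Good A := by
      clear hdeg hα ha a
      intro n
      induction n with
      | zero =>
        intro _ A _ _ a ha hα hdeg hk
        have h1 := hk Fin.elim0
        rw [discr_zero, ev_one, List.ofFn_zero, List.prod_nil] at h1
        have : Subsingleton A := subsingleton_of_zero_eq_one h1.symm
        exact good_of_subsingleton
      | succ n ihn =>
        intro hn A _ _ a ha hα hdeg hk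
        obtain ⟨B, _, _, φ, hφ, hspan, ⟨g, hg, hgd, hgw⟩, hmul⟩ :=
          exists_integral_extension (wordVal a u) n hk
        have gB : Good B := by
          refine ih (MvPolynomial (Fin n) C) B (φ ∘ a) (fun σ => MvPolynomial.C (α σ))
            (adjoin_map_eq_top MvPolynomial.C φ hφ hspan a ha)
            (hα.extend MvPolynomial.C φ hφ hspan) (by simp [hα1]) ?_
          intro l hl hlL
          rw [wordVal_map]
          by_cases hlu : l = u
          · subst hlu
            exact ⟨g, hg, by omega, hgw⟩
          · exact (hdeg l hl (by simp [hlu, hlL])).map MvPolynomial.C φ hφ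
        -- the right annihilator of the kernel of `φ`
        let K : TwoSidedIdeal A := TwoSidedIdeal.mk' {k | ∀ a, φ a = 0 → a * k = 0}
          (fun a _ => by simp)
          (fun {x y} hx hy a ha => by rw [mul_add, hx a ha, hy a ha, add_zero])
          (fun {x} hx a ha => by rw [mul_neg, hx a ha, neg_zero])
          (fun {x y} hy a ha => by
            rw [← mul_assoc]; exact hy _ (by rw [map_mul, ha, zero_mul]))
          (fun {x y} hx a ha => by rw [← mul_assoc, hx a ha, zero_mul])
        have hK : ∀ k, k ∈ K ↔ ∀ a, φ a = 0 → a * k = 0 := fun k => by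
          simp only [K]; rw [TwoSidedIdeal.mem_mk']; rfl
        have hsurj := quotMk_surjective (C := C) K
        have hφq : ∀ (c : C) (a : A), (quotMk C K : A →+* QuotI K) (c • a) =
            RingHom.id C c • (quotMk C K : A →+* QuotI K) a := fun c a => map_smul (quotMk C K) c a
        have hspanq : Submodule.span C (Set.range (quotMk C K : A →+* QuotI K)) = ⊤ := by
          rw [show Set.range (quotMk C K : A →+* QuotI K) = Set.univ from hsurj.range_eq,
            Submodule.span_univ]
        have gK : Good (QuotI K) := by
          refine ihn (by omega) (QuotI K) ((quotMk C K : A →+* QuotI K) ∘ a)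
            (adjoin_map_eq_top (RingHom.id C) _ hφq hspanq a ha)
            (hα.of_surjective (quotMk C K) hsurj) ?_ ?_
          · intro l hl hlL
            rw [wordVal_map]
            exact (hdeg l hl hlL).map (RingHom.id C) _ hφq
          · intro y
            obtain ⟨y, rfl⟩ : ∃ y', (quotMk C K) ∘ y' = y := by
              choose y' hy' using fun i => hsurj (y i)
              exact ⟨y', funext hy'⟩
            rw [wordVal_map]
            refine (map_ev (quotMk C K) (wordVal a u) y (discr C n)).symm.trans ?_
            rw [quotMk_eq_zero, hK]
            exact fun b hb => hmul b hb y
        refine good_of_two (φ₁ := φ) (φ₂ := (quotMk C K : A →+* QuotI K))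
          (CentGen.of_span (R := MvPolynomial (Fin n) C) φ hspan) (.of_surjective hsurj) gB gK ?_
        intro x y hx hy
        exact (hK y).1 ((quotMk_eq_zero (C := C)).1 hy) x hx
    refine inner (D + 1) le_rfl A a ha hα hdeg ?_
    have := hα.kills (wordVal a u)
    rwa [hα1, one_smul] at this

/-- A finitely generated algebra over a Noetherian ring that satisfies a multilinear identity
with leading coefficient `1` has a vanishing finite product of prime ideals. -/
theorem good_of_multId {C : Type u} {A : Type u} [CommRing C] [IsNoetherianRing C] [Ring A]
    [Algebra C A] {r D : ℕ} (a : Fin r → A) (ha : Algebra.adjoin C (Set.range a) = ⊤)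
    {α : Equiv.Perm (Fin D) → C} (hα : MultId A α) (hα1 : α 1 = 1) : Good A := by
  obtain ⟨N, hN⟩ := shirshov (2 * D + 1) D (by omega) (Fin r) Finset.univ
  refine good_of_words (fun l => hN l (by simp)) (List.finite_length_le (Fin r) N).toFinset.toList
    C A a α ha hα hα1 fun l hl hl' => absurd ?_ hl'
  simpa using hl

end TRad

namespace TRad

/-! ### Linearization -/

section lin
variable {C : Type*} [CommRing C] {A : Type*} [Ring A] [Algebra C A]

/-- Inclusion–exclusion: the alternating number of sets containing the range of `κ`. -/
theorem alternating_sum {D e : ℕ} (κ : Fin e → Fin D) :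
    ∑ S : Finset (Fin D), (-1 : C) ^ S.card * ∏ i, (if κ i ∈ S then 1 else 0) =
      if Function.Surjective κ then (-1) ^ D else 0 := by
  classical
  have h1 := Finset.prod_add (fun _ : Fin D => (-1 : C))
    (fun k => if k ∈ Set.range κ then 0 else 1) Finset.univ
  have h2 : ∑ S : Finset (Fin D), (-1 : C) ^ S.card * ∏ i, (if κ i ∈ S then 1 else 0) =
      ∏ k : Fin D, (-1 + if k ∈ Set.range κ then (0 : C) else 1) := by
    rw [h1, Finset.powerset_univ]
    refine Finset.sum_congr rfl fun S _ => ?_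
    rw [Finset.prod_const]
    congr 1
    by_cases h : ∀ i, κ i ∈ S
    · rw [Finset.prod_eq_one fun i _ => if_pos (h i), Finset.prod_eq_one]
      intro k hk
      rw [if_neg]
      rintro ⟨i, rfl⟩
      exact (Finset.mem_sdiff.1 hk).2 (h i)
    · push Not at h
      obtain ⟨i, hi⟩ := h
      have hi' : κ i ∈ Finset.univ \ S := by simp [hi]
      rw [Finset.prod_eq_zero (Finset.mem_univ i) (if_neg hi)]
      symm
      apply Finset.prod_eq_zero hi'
      simp
  rw [h2]
  split_ifs with hs
  · simp [hs.range_eq]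
  · simp only [Function.Surjective, not_forall] at hs
    obtain ⟨k, hk⟩ := hs
    exact Finset.prod_eq_zero (Finset.mem_univ k) (by rw [if_neg (by simpa using hk)]; simp)

/-- Linearization of one word: the alternating sum over `S` of its values under the substitution
`x ↦ ∑ k ∈ S, m₀ k = x, a k`. -/
theorem linearize_word {Y : Type*} [DecidableEq Y] {D : ℕ} (m₀ : Fin D → Y) (a : Fin D → A)
    (m : List Y) (hm : m.length ≤ D) :
    ∑ S : Finset (Fin D), (-1 : C) ^ S.card • (m.map fun x => ∑ k : Fin D,
        ((if k ∈ S then 1 else 0 : C) * (if m₀ k = x then 1 else 0)) • a k).prod =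
      (-1 : C) ^ D • ∑ σ : Equiv.Perm (Fin D), (if List.ofFn (m₀ ∘ σ) = m then 1 else 0 : C) •
        (List.ofFn fun i => a (σ i)).prod := by
  have h1 : ∀ S : Finset (Fin D), (m.map fun x => ∑ k : Fin D,
        ((if k ∈ S then 1 else 0 : C) * (if m₀ k = x then 1 else 0)) • a k).prod =
      ∑ κ : Fin m.length → Fin D, ((∏ i, (if κ i ∈ S then 1 else 0 : C)) *
        ∏ i, (if m₀ (κ i) = m.get i then 1 else 0)) • (List.ofFn fun i => a (κ i)).prod := by
    intro S
    have h := (MultilinearMap.mkPiAlgebraFin C m.length A).map_sum (α := fun _ => Fin D)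
      (fun i k => ((if k ∈ S then 1 else 0 : C) * (if m₀ k = m.get i then 1 else 0)) • a k)
    rw [MultilinearMap.mkPiAlgebraFin_apply] at h
    conv_lhs => rw [← List.ofFn_get m, List.map_ofFn]
    refine h.trans (Finset.sum_congr rfl fun κ _ => ?_)
    rw [(MultilinearMap.mkPiAlgebraFin C m.length A).map_smul_univ,
      MultilinearMap.mkPiAlgebraFin_apply, Finset.prod_mul_distrib]
  simp only [h1, Finset.smul_sum]
  rw [Finset.sum_comm]
  have h2 : ∀ κ : Fin m.length → Fin D, ∑ S : Finset (Fin D), (-1 : C) ^ S.card •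
      ((∏ i, (if κ i ∈ S then 1 else 0 : C)) *
        ∏ i, (if m₀ (κ i) = m.get i then 1 else 0)) • (List.ofFn fun i => a (κ i)).prod =
      ((if Function.Surjective κ then (-1) ^ D else 0) *
        ∏ i, (if m₀ (κ i) = m.get i then 1 else 0 : C)) • (List.ofFn fun i => a (κ i)).prod := by
    intro κ
    rw [← alternating_sum, Finset.sum_mul, Finset.sum_smul]
    simp only [smul_smul, mul_assoc]
  rw [Finset.sum_congr rfl fun κ _ => h2 κ]
  rcases hm.lt_or_eq with hlt | heq
  · rw [Finset.sum_eq_zero, Finset.sum_eq_zero]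
    · intro σ _
      rw [if_neg, zero_smul, smul_zero]
      intro h
      have := congrArg List.length h
      simp at this
      omega
    · intro κ _
      rw [if_neg, zero_mul, zero_smul]
      intro h
      have := Fintype.card_le_of_surjective κ h
      simp at this
      omega
  · subst heq
    symm
    refine Finset.sum_of_injOn (fun σ : Equiv.Perm (Fin m.length) => (σ : Fin m.length → _))
      (fun σ _ τ _ h => DFunLike.coe_injective h) (fun _ _ => Finset.mem_coe.2 (Finset.mem_univ _))
      ?_ ?_
    · intro κ _ hκ
      rw [if_neg, zero_mul, zero_smul]
      intro h
      exact hκ ⟨Equiv.ofBijective κ (Finite.injective_iff_bijective.1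
        (Finite.injective_iff_surjective.2 h)), by simp, rfl⟩
    · intro σ _
      rw [if_pos σ.surjective, smul_smul]
      congr 2
      by_cases h : List.ofFn (m₀ ∘ σ) = m
      · rw [if_pos h, Finset.prod_eq_one]
        intro i _
        rw [if_pos]
        have h3 : List.ofFn (m₀ ∘ σ) = List.ofFn m.get := by rw [h, List.ofFn_get]
        exact congrFun (List.ofFn_injective h3) i
      · rw [if_neg h]
        by_contra hne
        apply h
        have h3 : ∀ i, m₀ (σ i) = m.get i := by
          intro i
          by_contra hi
          exact hne (Finset.prod_eq_zero (Finset.mem_univ i) (if_neg hi)).symm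
        rw [show m₀ ∘ σ = m.get from funext h3, List.ofFn_get]

/-- Every polynomial identity has multilinear consequences, with the coefficients of the
permutations of any chosen word of top degree. -/
theorem MultId.of_identity {Y : Type*} {D : ℕ} (g : List Y →₀ C)
    (hD : ∀ m ∈ g.support, m.length ≤ D)
    (hid : ∀ val : Y → A, (g.sum fun m c => c • (m.map val).prod) = 0) (m₀ : Fin D → Y) :
    MultId A fun σ : Equiv.Perm (Fin D) => g (List.ofFn (m₀ ∘ σ)) := by
  classical
  intro a
  have h1 : ∑ S : Finset (Fin D), (-1 : C) ^ S.card • (g.sum fun m c => c •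
      (m.map fun x => ∑ k : Fin D,
        ((if k ∈ S then 1 else 0 : C) * (if m₀ k = x then 1 else 0)) • a k).prod) = 0 :=
    Finset.sum_eq_zero fun S _ => by rw [hid, smul_zero]
  simp only [Finsupp.sum, Finset.smul_sum] at h1
  rw [Finset.sum_comm] at h1
  simp only [smul_comm _ (g _)] at h1
  simp only [← Finset.smul_sum] at h1
  rw [Finset.sum_congr rfl fun m hm => by rw [linearize_word m₀ a m (hD m hm)]] at h1
  simp only [smul_comm (g _) ((-1 : C) ^ D)] at h1
  rw [← Finset.smul_sum] at h1
  have h2 := congrArg (fun z => (-1 : C) ^ D • z) h1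
  simp only [smul_smul, ← mul_pow, neg_mul_neg, one_mul, one_pow, one_smul, smul_zero] at h2
  simp only [Finset.smul_sum] at h2
  rw [Finset.sum_comm] at h2
  rw [← h2]
  refine Finset.sum_congr rfl fun σ _ => ?_
  simp only [ite_smul, one_smul, zero_smul, smul_ite, smul_zero]
  rw [Finset.sum_ite_eq]
  split_ifs with h
  · rfl
  · rw [Finsupp.notMem_support_iff.1 h, zero_smul]

end lin
end TRad

namespace TRad
open MvPolynomial

/-! ### From discriminants back to monic multilinear identities -/

section monic
variable {C : Type*} [CommRing C] {A : Type*} [Ring A] [Algebra C A]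

/-- The word `w ⋯ w y₀ w ⋯ w y₁ ⋯` with `k i` letters `w` (encoded as `none`) before `yᵢ`
(encoded as `some (e i)`). -/
def interlaceWord {Z : Type*} {n : ℕ} (e : Fin n → Z) (k : Fin n → ℕ) : List (Option Z) :=
  (List.ofFn fun i => List.replicate (k i) none ++ [some (e i)]).flatten

theorem interlaceWord_injective {Z : Type*} {n : ℕ} (e : Fin n → Z) :
    Function.Injective (interlaceWord e) := by
  induction n with
  | zero => intro k k' _; exact Subsingleton.elim _ _
  | succ n ih =>
    intro k k' h
    have hsucc : ∀ k : Fin (n + 1) → ℕ, interlaceWord e k = List.replicate (k 0) none ++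
        (some (e 0) :: interlaceWord (fun i => e i.succ) fun i => k i.succ) := fun k => by
      simp [interlaceWord, List.ofFn_succ]
    rw [hsucc, hsucc] at h
    have h0 : k 0 = k' 0 := by
      have := congrArg (fun l => (l.takeWhile Option.isNone).length) h
      simpa [List.takeWhile_append, List.takeWhile_replicate] using this
    rw [h0, List.append_cancel_left_eq] at h
    have h1 := ih _ (List.cons.inj h).2
    funext i
    refine Fin.cases h0 (fun j => ?_) i
    exact congrFun h1 j

theorem length_interlaceWord {Z : Type*} {n : ℕ} (e : Fin n → Z) (k : Fin n → ℕ) :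
    (interlaceWord e k).length = (∑ i, k i) + n := by
  simp [interlaceWord, List.length_flatten, List.map_ofFn, List.sum_ofFn, Finset.sum_add_distrib]

theorem prod_interlaceWord {n : ℕ} (val : Option (Fin n) → A) (k : Fin n →₀ ℕ) :
    ((interlaceWord id k).map val).prod = interlace (val none) (fun i => val (some i)) k := by
  simp only [interlaceWord, interlace, List.map_flatten, List.prod_flatten, List.map_ofFn]
  congr 2
  funext i
  simp

theorem ev_eq_sum (w : A) {n : ℕ} (y : Fin n → A) (p : MvPolynomial (Fin n) C) :
    ev w y p = ∑ k ∈ p.support, p.coeff k • interlace w y k := by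
  conv_lhs => rw [p.as_sum, map_sum]
  exact Finset.sum_congr rfl fun k _ => ev_monomial ..

theorem discr_isHomogeneous (n : ℕ) : ∃ D, (discr C n).IsHomogeneous D := by
  refine ⟨_, IsHomogeneous.prod _ _ (fun _ => _) fun a _ =>
    IsHomogeneous.prod _ _ (fun b => if a = b then 0 else 1) fun b _ => ?_⟩
  unfold diffFactor
  split_ifs with h
  · exact isHomogeneous_one _ _
  · exact (isHomogeneous_X _ _).sub (isHomogeneous_X _ _)

/-- The values of the discriminant at `w` and `y` are those of a noncommutative polynomial in
`w, y₀, …, yₙ₋₁`, homogeneous and with an invertible coefficient, which is linearized. -/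
theorem exists_monic_multId {n : ℕ} (h : ∀ w : A, Kills w (discr C n)) :
    ∃ (D : ℕ) (α : Equiv.Perm (Fin D) → C), MultId A α ∧ α 1 = 1 := by
  classical
  obtain ⟨k₀, hk₀⟩ := exists_isUnit_coeff_discr C n
  obtain ⟨E, hE⟩ := discr_isHomogeneous (C := C) n
  rcases subsingleton_or_nontrivial C with hC | hC
  · have := Module.subsingleton C A
    exact ⟨0, 1, fun x => Subsingleton.elim _ _, rfl⟩
  let W : (Fin n →₀ ℕ) → List (Option (Fin n)) := fun k => interlaceWord id k
  have hW : Function.Injective W := fun k k' h => DFunLike.coe_injective (interlaceWord_injective _ h)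
  let g : List (Option (Fin n)) →₀ C :=
    ∑ k ∈ (discr C n).support, Finsupp.single (W k) ((discr C n).coeff k)
  have hlen : ∀ k ∈ (discr C n).support, (W k).length = E + n := fun k hk => by
    have := hE (mem_support_iff.1 hk)
    rw [Finsupp.weight_apply, Finsupp.sum_fintype _ _ (by simp)] at this
    simp only [W, length_interlaceWord]
    simpa using this
  have hk₀' : k₀ ∈ (discr C n).support := mem_support_iff.2 hk₀.ne_zero
  have hgk : g (W k₀) = (discr C n).coeff k₀ := by
    simp only [g, Finsupp.finsetSum_apply]
    rw [Finset.sum_eq_single k₀]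
    · simp
    · intro k _ hk
      rw [Finsupp.single_apply, if_neg (hW.ne hk)]
    · exact fun h => absurd hk₀' h
  have hD : ∀ m ∈ g.support, m.length ≤ (W k₀).length := by
    intro m hm
    have := Finsupp.support_finsetSum hm
    simp only [Finset.mem_biUnion] at this
    obtain ⟨k, hk, hmk⟩ := this
    have := Finsupp.support_single_subset hmk
    rw [Finset.mem_singleton] at this
    rw [this, hlen k hk, hlen k₀ hk₀']
  have hid : ∀ val : Option (Fin n) → A, (g.sum fun m c => c • (m.map val).prod) = 0 := by
    intro val
    rw [← h (val none) fun i => val (some i), ev_eq_sum]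
    simp only [g]
    rw [← Finsupp.sum_finsetSum_index (by simp) (by simp [add_smul])]
    refine Finset.sum_congr rfl fun k _ => ?_
    rw [Finsupp.sum_single_index (by simp), prod_interlaceWord]
  have hα := MultId.of_identity g hD hid (W k₀).get
  obtain ⟨u, hu⟩ := hk₀
  refine ⟨_, fun σ => (↑u⁻¹ : C) * g (List.ofFn ((W k₀).get ∘ σ)), fun x => ?_, ?_⟩
  · have := hα x
    simp only [mul_smul]
    rw [← Finset.smul_sum, this, smul_zero]
  · change (↑u⁻¹ : C) * g (List.ofFn (W k₀).get) = 1
    rw [List.ofFn_get, hgk, ← hu, Units.inv_mul]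

end monic
end TRad

namespace TRad

/-! ### Relatively free algebras -/

universe u v

/-- The version of `good_of_multId` without universe restrictions. -/
theorem good_of_multId' {C : Type u} {A : Type v} [CommRing C] [IsNoetherianRing C] [Ring A]
    [Algebra C A] {r D : ℕ} (a : Fin r → A)
    (ha : Algebra.adjoin C (Set.range a) = ⊤)
    {α : Equiv.Perm (Fin D) → C} (hα : MultId A α) (hα1 : α 1 = 1) : Good A := by
  let C' := ULift.{v} C
  let A' := ULift.{u} A
  let : Algebra C' A' := Algebra.ofModule
    (fun c x y => by ext; exact smul_mul_assoc c.down x.down y.down)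
    (fun c x y => by ext; exact mul_smul_comm c.down x.down y.down)
  let ι : C →+* C' := (ULift.ringEquiv.symm : C ≃+* C')
  let e : A ≃+* A' := ULift.ringEquiv.symm
  let φ : A →+* A' := e
  have hφ : ∀ (c : C) (x : A), φ (c • x) = ι c • φ x := fun c x => rfl
  have hspan : Submodule.span C' (Set.range φ) = ⊤ := by
    rw [show Set.range φ = Set.univ from e.surjective.range_eq, Submodule.span_univ]
  have : IsNoetherianRing C' := isNoetherianRing_of_ringEquiv C ULift.ringEquiv.symm
  exact Good.of_equiv e (good_of_multId (φ ∘ a) (adjoin_map_eq_top ι φ hφ hspan a ha)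
    (hα.extend ι φ hφ hspan) (by rw [hα1, map_one]))

section relfree
variable {C : Type*} [CommRing C] {ℓ : ℕ} {A : Type*} [Ring A] [Algebra C A]

open MonoidAlgebra

/-- Evaluation of noncommutative polynomials. -/
noncomputable def evalHom (C : Type*) [CommRing C] {ℓ : ℕ} {A : Type*} [Ring A] [Algebra C A]
    (val : Fin ℓ → A) : MonoidAlgebra C (FreeMonoid (Fin ℓ)) →ₐ[C] A :=
  MonoidAlgebra.lift C A (FreeMonoid (Fin ℓ)) (FreeMonoid.lift val)

theorem evalHom_apply (val : Fin ℓ → A) (f : MonoidAlgebra C (FreeMonoid (Fin ℓ))) :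
    evalHom C val f = ∑ m ∈ f.coeff.support, f.coeff m • ((FreeMonoid.toList m).map val).prod := by
  rw [evalHom, MonoidAlgebra.lift_apply, Finsupp.sum]
  simp only [FreeMonoid.lift_apply]

theorem evalHom_comp {B : Type*} [Ring B] [Algebra C B] (φ : A →ₐ[C] B) (val : Fin ℓ → A)
    (f : MonoidAlgebra C (FreeMonoid (Fin ℓ))) :
    evalHom C (φ ∘ val) f = φ (evalHom C val f) := by
  simp [evalHom_apply, map_sum, map_list_prod]

/-- `A` is relatively free on the family `a`: it is generated by `a`, and every relation between
the members of `a` is a polynomial identity of `A`. -/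
structure RelFree (C : Type*) [CommRing C] {ℓ : ℕ} {A : Type*} [Ring A] [Algebra C A]
    (a : Fin ℓ → A) : Prop where
  surj : Function.Surjective (evalHom C a)
  rel : ∀ f, evalHom C a f = 0 → ∀ val : Fin ℓ → A, evalHom C val f = 0

theorem RelFree.quot {a : Fin ℓ → A} (h : RelFree C a) (I : TwoSidedIdeal A)
    (hI : ∀ f, evalHom C a f ∈ I → ∀ val : Fin ℓ → A, evalHom C val f ∈ I) :
    RelFree C (quotMk C I ∘ a) := by
  refine ⟨?_, ?_⟩
  · intro z
    obtain ⟨x, rfl⟩ := quotMk_surjective (C := C) I z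
    obtain ⟨f, rfl⟩ := h.surj x
    exact ⟨f, evalHom_comp ..⟩
  · intro f hf val
    obtain ⟨val, rfl⟩ : ∃ v, quotMk C I ∘ v = val := by
      choose v hv using fun i => quotMk_surjective (C := C) I (val i)
      exact ⟨v, funext hv⟩
    rw [evalHom_comp, quotMk_eq_zero] at hf ⊢
    exact hI f hf val

theorem RelFree.adjoin_eq_top {a : Fin ℓ → A} (h : RelFree C a) :
    Algebra.adjoin C (Set.range a) = ⊤ := by
  rw [eq_top_iff]
  rintro x -
  obtain ⟨f, rfl⟩ := h.surj x
  rw [evalHom_apply]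
  refine Subalgebra.sum_mem _ fun m _ => Subalgebra.smul_mem _ (Subalgebra.list_prod_mem _ ?_) _
  intro y hy
  obtain ⟨i, -, rfl⟩ := List.mem_map.1 hy
  exact Algebra.subset_adjoin ⟨i, rfl⟩

/-- The ideal `cA`. -/
def smulIdeal (A : Type*) [Ring A] [Algebra C A] (c : C) : TwoSidedIdeal A :=
  TwoSidedIdeal.mk' {x | ∃ z, x = c • z} ⟨0, by simp⟩
    (fun {x y} ⟨z, hz⟩ ⟨z', hz'⟩ => ⟨z + z', by rw [hz, hz', smul_add]⟩)
    (fun {x} ⟨z, hz⟩ => ⟨-z, by rw [hz, smul_neg]⟩)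
    (fun {x y} ⟨z, hz⟩ => ⟨x * z, by rw [hz, mul_smul_comm]⟩)
    (fun {x y} ⟨z, hz⟩ => ⟨z * y, by rw [hz, smul_mul_assoc]⟩)

theorem mem_smulIdeal {c : C} {x : A} : x ∈ smulIdeal A c ↔ ∃ z, x = c • z := by
  unfold smulIdeal; rw [TwoSidedIdeal.mem_mk']; rfl

/-- The annihilator of `c` in `A`. -/
def annIdeal (A : Type*) [Ring A] [Algebra C A] (c : C) : TwoSidedIdeal A :=
  TwoSidedIdeal.mk' {x | c • x = 0} (by simp)
    (fun {x y} hx hy => by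
      change c • (x + y) = 0
      rw [smul_add, show c • x = 0 from hx, show c • y = 0 from hy, add_zero])
    (fun {x} hx => by change c • -x = 0; rw [smul_neg, show c • x = 0 from hx, neg_zero])
    (fun {x y} hy => by
      change c • (x * y) = 0
      rw [← mul_smul_comm, show c • y = 0 from hy, mul_zero])
    (fun {x y} hx => by
      change c • (x * y) = 0
      rw [← smul_mul_assoc, show c • x = 0 from hx, zero_mul])

theorem mem_annIdeal {c : C} {x : A} : x ∈ annIdeal A c ↔ c • x = 0 := by
  unfold annIdeal; rw [TwoSidedIdeal.mem_mk']; rfl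

theorem RelFree.smulIdeal {a : Fin ℓ → A} (h : RelFree C a) (c : C) :
    RelFree C (quotMk C (smulIdeal A c) ∘ a) := by
  refine h.quot _ fun f hf val => ?_
  rw [mem_smulIdeal] at hf ⊢
  obtain ⟨z, hz⟩ := hf
  obtain ⟨k, rfl⟩ := h.surj z
  refine ⟨evalHom C val k, ?_⟩
  have := h.rel (f - c • k) (by rw [map_sub, map_smul, hz, sub_self]) val
  rwa [map_sub, map_smul, sub_eq_zero] at this

theorem RelFree.annIdeal {a : Fin ℓ → A} (h : RelFree C a) (c : C) :
    RelFree C (quotMk C (annIdeal A c) ∘ a) := by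
  refine h.quot _ fun f hf val => ?_
  rw [mem_annIdeal, ← map_smul] at hf ⊢
  exact h.rel _ hf val

theorem good_of_smul_ann (c : C) (h₁ : Good (QuotI (smulIdeal A c)))
    (h₂ : Good (QuotI (annIdeal A c))) : Good A := by
  refine good_of_two (φ₁ := (quotMk C (smulIdeal A c) : A →+* _))
    (φ₂ := (quotMk C (annIdeal A c) : A →+* _)) (.of_surjective (quotMk_surjective (C := C) _))
    (.of_surjective (quotMk_surjective (C := C) _)) h₁ h₂ fun x y hx hy => ?_
  have hx := mem_smulIdeal.1 ((quotMk_eq_zero (C := C)).1 hx)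
  have hy := mem_annIdeal.1 ((quotMk_eq_zero (C := C)).1 hy)
  obtain ⟨z, rfl⟩ := hx
  rw [smul_mul_assoc, ← mul_smul_comm, hy, mul_zero]

/-- If the relations have all their coefficients in a prime `J` annihilating `A`, then `A` is a
free algebra over the domain `C ⧸ J`. -/
theorem good_of_coeff_mem {a : Fin ℓ → A} (h : RelFree C a) (J : Ideal C) (hJ : J.IsPrime)
    (hA : ∀ c ∈ J, ∀ x : A, c • x = 0)
    (hf : ∀ f, evalHom C a f = 0 → ∀ m, f.coeff m ∈ J) : Good A := by
  let q := mapRingHom (FreeMonoid (Fin ℓ)) (Ideal.Quotient.mk J)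
  have hq : ∀ f, q f = 0 ↔ ∀ m, f.coeff m ∈ J := by
    intro f
    rw [MonoidAlgebra.ext_iff, Finsupp.ext_iff]
    simp [q, Ideal.Quotient.eq_zero_iff_mem]
  have hev : ∀ f, evalHom C a f = 0 ↔ q f = 0 := by
    intro f
    rw [hq]
    refine ⟨hf f, fun h => ?_⟩
    rw [evalHom_apply]
    exact Finset.sum_eq_zero fun m _ => hA _ (h m) _
  have : NoZeroDivisors A := ⟨fun {x y} hxy => by
    obtain ⟨f, rfl⟩ := h.surj x
    obtain ⟨g, rfl⟩ := h.surj y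
    rw [← map_mul, hev, map_mul, mul_eq_zero] at hxy
    rwa [hev, hev]⟩
  exact good_of_noZeroDivisors

/-- A relation with a coefficient outside `J` gives a multilinear identity with leading
coefficient outside `J`. -/
theorem exists_multId {a : Fin ℓ → A} (h : RelFree C a) (J : Ideal C)
    (hA : ∀ c ∈ J, ∀ x : A, c • x = 0) (f : MonoidAlgebra C (FreeMonoid (Fin ℓ)))
    (hf : evalHom C a f = 0) (m : FreeMonoid (Fin ℓ)) (hm : f.coeff m ∉ J) :
    ∃ (D : ℕ) (α : Equiv.Perm (Fin D) → C), MultId A α ∧ α 1 ∉ J := by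
  classical
  let F : List (Fin ℓ) →₀ C := f.coeff
  let g : List (Fin ℓ) →₀ C := F.filter fun m => F m ∉ J
  have hg : ∀ m, m ∈ g.support ↔ F m ∉ J := fun m => by
    simp only [g, Finsupp.support_filter, Finset.mem_filter, Finsupp.mem_support_iff]
    exact ⟨fun h => h.2, fun h => ⟨fun h0 => h (h0 ▸ J.zero_mem), h⟩⟩
  have hgF : ∀ m, F m ∉ J → g m = F m := fun m hm =>
    Finsupp.filter_apply_pos (fun m => F m ∉ J) F hm
  obtain ⟨m₀, hm₀, hmax⟩ := Finset.exists_max_image g.support List.length ⟨m, (hg m).2 hm⟩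
  refine ⟨_, _, MultId.of_identity g hmax (fun val => ?_) m₀.get, ?_⟩
  · have h1 : (∑ m ∈ F.support, F m • (m.map val).prod) = 0 :=
      (evalHom_apply val f).symm.trans (h.rel f hf val)
    rw [← h1, Finsupp.sum]
    refine Finset.sum_subset_zero_on_sdiff ?_ ?_ ?_
    · simp only [g, Finsupp.support_filter]
      exact Finset.filter_subset _ _
    · intro m hm
      exact hA _ (not_not.1 fun h => (Finset.mem_sdiff.1 hm).2 ((hg m).2 h)) _
    · intro m hm
      rw [hgF m ((hg m).1 hm)]
  · change g (List.ofFn m₀.get) ∉ J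
    rw [List.ofFn_get, hgF m₀ ((hg m₀).1 hm₀)]
    exact (hg m₀).1 hm₀

end relfree

/-- Noetherian induction on an ideal `J` of scalars annihilating `A`. -/
theorem good_of_relFree {C : Type u} [CommRing C] [IsNoetherianRing C] {ℓ : ℕ} (J : Ideal C) :
    ∀ (A : Type v) [Ring A] [Algebra C A] (a : Fin ℓ → A), RelFree C a →
      (∀ c ∈ J, ∀ x : A, c • x = 0) → Good A := by
  refine IsNoetherian.induction (P := fun J : Ideal C => ∀ (A : Type v) [Ring A] [Algebra C A]
    (a : Fin ℓ → A), RelFree C a → (∀ c ∈ J, ∀ x : A, c • x = 0) → Good A) ?_ J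
  clear J
  intro (J : Ideal C) ih
  intro A _ _ a h hA
  have hlt : ∀ c ∉ J, J < J ⊔ Ideal.span {c} := fun c hc =>
    lt_of_le_of_ne le_sup_left fun e => hc (e ▸ Ideal.mem_sup_right (Ideal.mem_span_singleton_self c))
  have hsup : ∀ (c : C) (I : TwoSidedIdeal A), (∀ x : A, c • x ∈ I) →
      ∀ d ∈ J ⊔ Ideal.span {c}, ∀ z : QuotI I, d • z = 0 := by
    intro c I hI d hd z
    obtain ⟨x, rfl⟩ := quotMk_surjective (C := C) I z
    obtain ⟨j, hj, e, he, rfl⟩ := Submodule.mem_sup.1 hd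
    obtain ⟨e, rfl⟩ := Ideal.mem_span_singleton'.1 he
    rw [← map_smul, add_smul, hA j hj, zero_add, mul_comm, mul_smul]
    exact quotMk_eq_zero.2 (hI _)
  have hsmul : ∀ c ∉ J, Good (QuotI (smulIdeal A c)) := fun c hc =>
    ih _ (hlt c hc) _ _ (h.smulIdeal c) (hsup c _ fun x => mem_smulIdeal.2 ⟨x, rfl⟩)
  by_cases hJ : J.IsPrime
  · by_cases hf : ∀ f, evalHom C a f = 0 → ∀ m, f.coeff m ∈ J
    · exact good_of_coeff_mem h J hJ hA hf
    push Not at hf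
    obtain ⟨f, hf, m, hm⟩ := hf
    obtain ⟨D, α, hα, hα1⟩ := exists_multId h J hA f hf m hm
    refine good_of_smul_ann (α 1) (hsmul _ hα1) ?_
    have hk : ∀ w : QuotI (annIdeal A (α 1)), Kills w (discr C (D + 1)) := by
      intro w y
      obtain ⟨w, rfl⟩ := quotMk_surjective (C := C) _ w
      obtain ⟨y, rfl⟩ : ∃ v, quotMk C (annIdeal A (α 1)) ∘ v = y := by
        choose v hv using fun i => quotMk_surjective (C := C) _ (y i)
        exact ⟨v, funext hv⟩
      rw [← map_ev, quotMk_eq_zero, mem_annIdeal, ← map_smul]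
      exact hα.kills w y
    obtain ⟨E, β, hβ, hβ1⟩ := exists_monic_multId hk
    exact good_of_multId' _ (h.annIdeal (α 1)).adjoin_eq_top hβ hβ1
  · rcases Ideal.not_isPrime_iff.1 hJ with rfl | ⟨c, hc, d, hd, hcd⟩
    · have : Subsingleton A := subsingleton_of_zero_eq_one (by
        rw [← hA 1 trivial 1, one_smul])
      exact good_of_subsingleton
    · refine good_of_smul_ann c (hsmul c hc) (ih _ (hlt d hd) _ _ (h.annIdeal c) (hsup d _ ?_))
      intro x
      rw [mem_annIdeal, smul_smul]
      exact hA _ hcd x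

/-- The quotient of the free algebra by an ideal stable under endomorphisms is relatively free,
because a tuple of elements of the quotient lifts to an endomorphism of the free algebra. -/
theorem relFree_of_hom {C : Type u} [CommRing C] {ℓ : ℕ} {A : Type v} [Ring A] [Algebra C A]
    (π : FreeAlgebra C (Fin ℓ) →ₐ[C] A) (hsurj : Function.Surjective π)
    (hker : ∀ (φ : FreeAlgebra C (Fin ℓ) →ₐ[C] FreeAlgebra C (Fin ℓ))
      (x : FreeAlgebra C (Fin ℓ)), π x = 0 → π (φ x) = 0) :
    RelFree C fun i => π (FreeAlgebra.ι C i) := by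
  let e := FreeAlgebra.equivMonoidAlgebraFreeMonoid (R := C) (X := Fin ℓ)
  have he : ∀ (val : Fin ℓ → A) (x : FreeAlgebra C (Fin ℓ)),
      evalHom C val (e x) = FreeAlgebra.lift C val x := by
    intro val x
    have : (evalHom C val).comp (e : FreeAlgebra C (Fin ℓ) →ₐ[C] _) = FreeAlgebra.lift C val := by
      ext i
      simp [e, FreeAlgebra.equivMonoidAlgebraFreeMonoid, evalHom]
    exact DFunLike.congr_fun this x
  have hπ : FreeAlgebra.lift C (fun i => π (FreeAlgebra.ι C i)) = π := by
    ext i; simp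
  refine ⟨fun x => ?_, fun f hf val => ?_⟩
  · obtain ⟨y, rfl⟩ := hsurj x
    exact ⟨e y, by rw [he, hπ]⟩
  · obtain ⟨x, rfl⟩ := e.surjective f
    rw [he, hπ] at hf
    choose v hv using fun i => hsurj (val i)
    have h1 : π.comp (FreeAlgebra.lift C v) = FreeAlgebra.lift C val := by
      ext i; simp [hv]
    rw [he, ← h1]
    exact hker _ x hf

end TRad

/-- Let `A` be the relatively free affine algebra `FreeAlgebra C (Fin ℓ) / I` for a T-ideal
`I` over a commutative Noetherian ring `C`; here `A` is presented as a `C`-algebra together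
with a surjective `C`-algebra homomorphism `π` from the free algebra whose kernel (the
T-ideal `I`) is stable under all endomorphisms of the free algebra.  Then the T-radical of
`A` is the intersection of finitely many T-prime T-ideals: there are `k ≥ 1` T-prime
T-ideals `P 1, …, P k` whose intersection is a nilpotent T-ideal containing every
nilpotent T-ideal of `A`. -/
theorem stmt19 (C : Type*) [CommRing C] [IsNoetherianRing C] (ℓ : ℕ)
    (A : Type*) [Ring A] [Algebra C A]
    (π : FreeAlgebra C (Fin ℓ) →ₐ[C] A) (hsurj : Function.Surjective π)
    (hker : ∀ (φ : FreeAlgebra C (Fin ℓ) →ₐ[C] FreeAlgebra C (Fin ℓ))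
      (x : FreeAlgebra C (Fin ℓ)), π x = 0 → π (φ x) = 0) :
    ∃ k : ℕ, 1 ≤ k ∧ ∃ P : Fin k → TwoSidedIdeal A,
      (∀ i, IsTIdeal C A (P i) ∧ IsTPrime C A (P i)) ∧
      IsTIdeal C A (⨅ i, P i) ∧
      IsNilpotentTwoSidedIdeal (⨅ i, P i) ∧
      ∀ N : TwoSidedIdeal A, IsTIdeal C A N → IsNilpotentTwoSidedIdeal N →
        N ≤ ⨅ i, P i := by
  exact TRad.conclusion_of_good (TRad.good_of_relFree (⊥ : Ideal C) A _
    (TRad.relFree_of_hom π hsurj hker) (by simp))
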